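/- Assume (H1)–(H6) and the growth condition ρ(v) ≤ C(1+‖v‖_V^α)(1+‖i v‖_H^β). Fix N∈ℕ and x∈H, and let g_n,g∈S^N be such that ∫_{𝕏_T} φ·g_n dν_T → ∫_{𝕏_T} φ·g dν_T as n→∞ for every continuous compactly supported φ:𝕏_T→ℝ. Let X^n and X denote the unique solutions of the skeleton equation with initial value x and controls g_n and g respectively. Then lim_{n→∞} sup_{t∈[0,T]} ‖X^n_t − X_t‖_H = 0. -/

import Mathlib

open MeasureTheory Real Filter
open scoped ENNReal RealInnerProductSpace

/-- A solution of the skeleton equation with initial value `x` and control `g`: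
a continuous `H`-valued path `X` on `[0,T]` together with a strongly measurable
`V`-valued representative `u` with `i ∘ u = X` a.e., `∫_0^T ‖u_t‖_V^α dt < ∞`, and
`⟪X_t, i v⟫ = ⟪x, i v⟫ + ∫_0^t ⟨𝒜(s,u_s), v⟩ ds + ∫_0^t ∫_𝕏 ⟪f(s,u_s,z), i v⟫ (g(s,z)-1) ν(dz) ds`
for all `t ∈ [0,T]`, `v ∈ V`. -/
def IsSkeletonSolution {𝕏 H V : Type*} [MeasurableSpace 𝕏]
    [NormedAddCommGroup H] [InnerProductSpace ℝ H]
    [NormedAddCommGroup V] [NormedSpace ℝ V]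
    (T α : ℝ) (ν : Measure 𝕏) (i : V →L[ℝ] H) (A : ℝ → V → (V →L[ℝ] ℝ))
    (f : ℝ → V → 𝕏 → H) (x : H) (g : ℝ × 𝕏 → ℝ) (X : ℝ → H) (u : ℝ → V) : Prop :=
  ContinuousOn X (Set.Icc 0 T) ∧ StronglyMeasurable u ∧
  (∀ᵐ t ∂(volume.restrict (Set.Icc 0 T)), i (u t) = X t) ∧
  (∫⁻ t in Set.Icc 0 T, ENNReal.ofReal (‖u t‖ ^ α)) < ⊤ ∧
  ∀ t ∈ Set.Icc 0 T, ∀ v : V,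
    ⟪X t, i v⟫ = ⟪x, i v⟫ + (∫ s in Set.Icc 0 t, A s (u s) v)
      + ∫ s in Set.Icc 0 t, ∫ z, ⟪f s (u s) z, i v⟫ * (g (s, z) - 1) ∂ν

theorem integral_mul_primitive_pow {T : ℝ} {k : ℝ → ℝ} (hk : IntervalIntegrable k volume 0 T)
    (n : ℕ) {t : ℝ} (ht : t ∈ Set.Icc 0 T) :
    ∫ s in (0 : ℝ)..t, k s * (∫ r in (0 : ℝ)..s, k r) ^ n
      = (∫ r in (0 : ℝ)..t, k r) ^ (n + 1) / (n + 1) := by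
  have hkt : IntervalIntegrable k volume 0 t := by
    refine hk.mono_set ?_
    rw [Set.uIcc_of_le ht.1, Set.uIcc_of_le (ht.1.trans ht.2)]
    exact Set.Icc_subset_Icc le_rfl ht.2
  have hac := hkt.absolutelyContinuousOnInterval_intervalIntegral (c := 0) (by simp)
  have hpow : ∀ m : ℕ, AbsolutelyContinuousOnInterval
      (fun s => (∫ r in (0 : ℝ)..s, k r) ^ (m + 1)) 0 t := by
    intro m
    induction m with
    | zero => simpa using hac
    | succ m ih => simpa only [pow_succ _ (m + 1)] using ih.fun_mul hac
  have h := (hpow n).integral_deriv_eq_sub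
  have h' : ∫ s in (0 : ℝ)..t, deriv (fun s => (∫ r in (0 : ℝ)..s, k r) ^ (n + 1)) s
      = ∫ s in (0 : ℝ)..t, (n + 1) * (k s * (∫ r in (0 : ℝ)..s, k r) ^ n) := by
    refine intervalIntegral.integral_congr_ae ?_
    filter_upwards [hkt.ae_hasDerivAt_integral] with s hs hs'
    have := (hs (Set.uIoc_subset_uIcc hs') 0 (by simp)).pow (n + 1)
    have h2 := this.deriv
    refine h2.trans ?_
    push_cast
    ring
  rw [h', intervalIntegral.integral_const_mul] at h
  simp only [intervalIntegral.integral_same] at h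
  field_simp
  rw [mul_comm]
  simpa using h

/-- Gronwall's inequality with an integrable kernel. -/
theorem le_mul_exp_of_le_add_integral_mul {T a M : ℝ} {k y : ℝ → ℝ}
    (hk : IntervalIntegrable k volume 0 T) (hk0 : ∀ s, 0 ≤ k s) (ha : 0 ≤ a)
    (hky : IntervalIntegrable (fun s => k s * y s) volume 0 T)
    (hyM : ∀ t ∈ Set.Icc 0 T, y t ≤ M)
    (h : ∀ t ∈ Set.Icc 0 T, y t ≤ a + ∫ s in (0 : ℝ)..t, k s * y s) :
    ∀ t ∈ Set.Icc 0 T, y t ≤ a * Real.exp (∫ s in (0 : ℝ)..T, k s) := by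
  set κ : ℝ → ℝ := fun s => ∫ r in (0 : ℝ)..s, k r with hκ
  have sub : ∀ t ∈ Set.Icc 0 T, Set.uIcc 0 t ⊆ Set.uIcc 0 T := by
    intro t ht
    rw [Set.uIcc_of_le ht.1, Set.uIcc_of_le (ht.1.trans ht.2)]
    exact Set.Icc_subset_Icc le_rfl ht.2
  have hκc : ∀ t ∈ Set.Icc 0 T, ContinuousOn κ (Set.uIcc 0 t) := fun t ht =>
    ((hk.mono_set (sub t ht)).absolutelyContinuousOnInterval_intervalIntegral
      (c := 0) (by simp)).continuousOn
  have key : ∀ n : ℕ, ∀ t ∈ Set.Icc 0 T,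
      y t ≤ a * ∑ j ∈ Finset.range n, κ t ^ j / j.factorial + M * (κ t ^ n / n.factorial) := by
    intro n
    induction n with
    | zero => intro t ht; simpa using hyM t ht
    | succ n ih =>
      intro t ht
      have hkt := hk.mono_set (sub t ht)
      have hI : ∀ j : ℕ, IntervalIntegrable (fun s => k s * κ s ^ j) volume 0 t := fun j =>
        hkt.mul_continuousOn ((hκc t ht).pow j)
      have hbound : ∫ s in (0 : ℝ)..t, k s * y s ≤ ∫ s in (0 : ℝ)..t,
          (a * ∑ j ∈ Finset.range n, (k s * κ s ^ j) / j.factorial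
            + M * ((k s * κ s ^ n) / n.factorial)) := by
        refine intervalIntegral.integral_mono_on ht.1 (hky.mono_set (sub t ht)) ?_ ?_
        · refine IntervalIntegrable.add (IntervalIntegrable.const_mul ?_ _)
            (((hI n).div_const _).const_mul _)
          simpa only [Finset.sum_fn] using IntervalIntegrable.sum (Finset.range n)
            (f := fun (j : ℕ) s => (k s * κ s ^ j) / j.factorial)
            (fun j _ => (hI j).div_const (j.factorial : ℝ))
        · intro s hs
          refine (mul_le_mul_of_nonneg_left (ih s ⟨hs.1, hs.2.trans ht.2⟩) (hk0 s)).trans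
            (le_of_eq ?_)
          rw [mul_add, mul_left_comm, Finset.mul_sum]
          congr 1
          · congr 1
            exact Finset.sum_congr rfl fun j _ => by ring
          · ring
      have hval : ∫ s in (0 : ℝ)..t,
          (a * ∑ j ∈ Finset.range n, (k s * κ s ^ j) / j.factorial
            + M * ((k s * κ s ^ n) / n.factorial))
          = a * ∑ j ∈ Finset.range n, κ t ^ (j + 1) / (j + 1).factorial
            + M * (κ t ^ (n + 1) / (n + 1).factorial) := by
        have hj : ∀ j : ℕ, ∫ s in (0 : ℝ)..t, (k s * κ s ^ j) / j.factorial
            = κ t ^ (j + 1) / (j + 1).factorial := by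
          intro j
          rw [intervalIntegral.integral_div, integral_mul_primitive_pow hk j ht,
            Nat.factorial_succ]
          push_cast
          rw [div_div]
        have hsumI : IntervalIntegrable
            (fun s => ∑ j ∈ Finset.range n, (k s * κ s ^ j) / j.factorial) volume 0 t := by
          simpa only [Finset.sum_fn] using IntervalIntegrable.sum (Finset.range n)
            (f := fun (j : ℕ) s => (k s * κ s ^ j) / j.factorial)
            (fun j _ => (hI j).div_const (j.factorial : ℝ))
        rw [intervalIntegral.integral_add (hsumI.const_mul a)
          (((hI n).div_const _).const_mul _), intervalIntegral.integral_const_mul,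
          intervalIntegral.integral_const_mul, hj,
          intervalIntegral.integral_finsetSum fun j _ => (hI j).div_const _]
        simp only [hj]
      rw [Finset.sum_range_succ']
      have := h t ht
      simp only [pow_zero, Nat.factorial_zero, Nat.cast_one, div_one, mul_add, mul_one]
      linarith
  intro t ht
  have hκ0 : 0 ≤ κ t := intervalIntegral.integral_nonneg ht.1 fun s _ => hk0 s
  have hκT : κ t ≤ κ T :=
    intervalIntegral.integral_mono_interval le_rfl ht.1 ht.2
      (Eventually.of_forall hk0) hk
  have hlim : Tendsto (fun n : ℕ => a * Real.exp (κ T) + M * (κ t ^ n / n.factorial)) atTop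
      (nhds (a * Real.exp (κ T) + M * 0)) :=
    ((FloorSemiring.tendsto_pow_div_factorial_atTop (κ t)).const_mul M).const_add _
  rw [mul_zero, add_zero] at hlim
  refine ge_of_tendsto' hlim fun n => (key n t ht).trans ?_
  gcongr
  exact (Real.sum_le_exp_of_nonneg hκ0 n).trans (Real.exp_le_exp.2 hκT)

/-- Integration by parts bound: the integral of a primitive against a density is controlled by the
uniform norm of the primitive of the density. -/
theorem abs_integral_primitive_mul_le {T t c d : ℝ} {a' μ : ℝ → ℝ} (ht : t ∈ Set.Icc 0 T)
    (ha : IntervalIntegrable a' volume 0 T) (hμ : IntervalIntegrable μ volume 0 T)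
    (hd : ∀ s ∈ Set.Icc 0 T, |∫ r in (0 : ℝ)..s, μ r| ≤ d)
    (hc : ∫ r in (0 : ℝ)..T, |a' r| ≤ c) :
    |∫ s in (0 : ℝ)..t, (∫ r in (0 : ℝ)..s, a' r) * μ s| ≤ 2 * c * d := by
  have sub : Set.uIcc 0 t ⊆ Set.uIcc 0 T := by
    rw [Set.uIcc_of_le ht.1, Set.uIcc_of_le (ht.1.trans ht.2)]
    exact Set.Icc_subset_Icc le_rfl ht.2
  have hat := ha.mono_set sub
  have hμt := hμ.mono_set sub
  have ha1 := hat.absolutelyContinuousOnInterval_intervalIntegral (c := 0) (by simp)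
  have hm1 := hμt.absolutelyContinuousOnInterval_intervalIntegral (c := 0) (by simp)
  have hparts := ha1.integral_mul_deriv_eq_deriv_mul hm1
  have e1 : ∫ s in (0 : ℝ)..t, (∫ r in (0 : ℝ)..s, a' r) * deriv (fun s => ∫ r in (0 : ℝ)..s, μ r) s
      = ∫ s in (0 : ℝ)..t, (∫ r in (0 : ℝ)..s, a' r) * μ s := by
    refine intervalIntegral.integral_congr_ae ?_
    filter_upwards [hμt.ae_hasDerivAt_integral] with s hs hs'
    rw [(hs (Set.uIoc_subset_uIcc hs') 0 (by simp)).deriv]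
  have e2 : ∫ s in (0 : ℝ)..t, deriv (fun s => ∫ r in (0 : ℝ)..s, a' r) s * (∫ r in (0 : ℝ)..s, μ r)
      = ∫ s in (0 : ℝ)..t, a' s * (∫ r in (0 : ℝ)..s, μ r) := by
    refine intervalIntegral.integral_congr_ae ?_
    filter_upwards [hat.ae_hasDerivAt_integral] with s hs hs'
    rw [(hs (Set.uIoc_subset_uIcc hs') 0 (by simp)).deriv]
  rw [e1, e2] at hparts
  have hd0 : 0 ≤ d := (abs_nonneg _).trans (hd t ht)
  have hct : ∫ r in (0 : ℝ)..t, |a' r| ≤ c :=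
    (intervalIntegral.integral_mono_interval le_rfl ht.1 ht.2
      (Eventually.of_forall fun _ => abs_nonneg _) ha.abs).trans hc
  have b1 : |∫ r in (0 : ℝ)..t, a' r| ≤ c :=
    (intervalIntegral.abs_integral_le_integral_abs ht.1).trans hct
  have b2 : |∫ s in (0 : ℝ)..t, a' s * (∫ r in (0 : ℝ)..s, μ r)| ≤ c * d := by
    refine (intervalIntegral.abs_integral_le_integral_abs ht.1).trans ?_
    refine (intervalIntegral.integral_mono_on ht.1
      (hat.mul_continuousOn hm1.continuousOn).abs (hat.abs.mul_const d) ?_).trans ?_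
    · intro s hs
      rw [abs_mul]
      exact mul_le_mul_of_nonneg_left (hd s ⟨hs.1, hs.2.trans ht.2⟩) (abs_nonneg _)
    · rw [intervalIntegral.integral_mul_const]
      exact mul_le_mul_of_nonneg_right hct hd0
  have b3 : |(∫ r in (0 : ℝ)..t, a' r) * ∫ r in (0 : ℝ)..t, μ r| ≤ c * d := by
    rw [abs_mul]
    exact mul_le_mul b1 (hd t ht) (abs_nonneg _) ((abs_nonneg _).trans b1)
  rw [hparts]
  simp only [intervalIntegral.integral_same, mul_zero, sub_zero]
  refine (abs_sub _ _).trans ?_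
  linarith

/-- Pointwise convergence of monotone functions to a continuous limit on a compact interval is
uniform. -/
theorem eventually_abs_sub_le_of_monotoneOn {T : ℝ} (hT : 0 < T) {M : ℕ → ℝ → ℝ} {m : ℝ → ℝ}
    (hM : ∀ n, MonotoneOn (M n) (Set.Icc 0 T)) (hm : ContinuousOn m (Set.Icc 0 T))
    (hlim : ∀ t ∈ Set.Icc 0 T, Tendsto (fun n => M n t) atTop (nhds (m t)))
    {ε : ℝ} (hε : 0 < ε) :
    ∀ᶠ n in atTop, ∀ t ∈ Set.Icc 0 T, |M n t - m t| ≤ ε := by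
  have huc := isCompact_Icc.uniformContinuousOn_of_continuous hm
  obtain ⟨δ, hδ, hδ'⟩ := Metric.uniformContinuousOn_iff.1 huc (ε / 2) (half_pos hε)
  obtain ⟨J, hJ⟩ := exists_nat_gt (T / δ)
  have hJ0 : (0 : ℝ) < J := (div_pos hT hδ).trans hJ
  have hstep : T / J < δ := by
    rw [div_lt_iff₀ hJ0]
    rw [div_lt_iff₀ hδ] at hJ
    linarith [mul_comm (J : ℝ) δ]
  have hgrid : ∀ j ∈ Finset.range (J + 1), (j : ℝ) * (T / J) ∈ Set.Icc 0 T := by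
    intro j hj
    have hj' : (j : ℝ) ≤ J := by exact_mod_cast Nat.lt_succ_iff.1 (Finset.mem_range.1 hj)
    refine ⟨by positivity, ?_⟩
    calc (j : ℝ) * (T / J) ≤ J * (T / J) := by gcongr
      _ = T := by field_simp
  have hev : ∀ᶠ n in atTop, ∀ j ∈ Finset.range (J + 1),
      |M n (j * (T / J)) - m (j * (T / J))| < ε / 2 := by
    rw [Filter.eventually_all_finset]
    intro j hj
    simpa [Real.dist_eq] using
      (Metric.tendsto_nhds.1 (hlim _ (hgrid j hj)) (ε / 2) (half_pos hε))
  filter_upwards [hev] with n hn t ht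
  rcases eq_or_lt_of_le ht.2 with htT | htT
  · have := hn J (Finset.mem_range.2 (Nat.lt_succ_self J))
    rw [show (J : ℝ) * (T / J) = t by rw [htT]; field_simp] at this
    linarith
  set j := ⌊t / (T / J)⌋₊ with hj
  have hTJ : 0 < T / J := div_pos hT hJ0
  have h1 : (j : ℝ) * (T / J) ≤ t := by
    rw [← le_div_iff₀ hTJ]
    exact Nat.floor_le (div_nonneg ht.1 hTJ.le)
  have h2 : t < ((j + 1 : ℕ) : ℝ) * (T / J) := by
    rw [← div_lt_iff₀ hTJ]
    push_cast
    exact Nat.lt_floor_add_one _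
  have hjJ : j < J := by
    rw [hj, Nat.floor_lt (div_nonneg ht.1 hTJ.le), div_lt_iff₀ hTJ]
    calc t < T := htT
      _ = J * (T / J) := by field_simp
  have mem1 : j ∈ Finset.range (J + 1) := Finset.mem_range.2 (by omega)
  have mem2 : j + 1 ∈ Finset.range (J + 1) := Finset.mem_range.2 (by omega)
  have n1 := abs_lt.1 (hn j mem1)
  have n2 := abs_lt.1 (hn (j + 1) mem2)
  have m1 := hM n (hgrid j mem1) ht h1
  have m2 := hM n ht (hgrid _ mem2) h2.le
  have hgap : ((j + 1 : ℕ) : ℝ) * (T / J) = j * (T / J) + T / J := by push_cast; ring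
  have u1 := hδ' _ (hgrid j mem1) t ht (by rw [Real.dist_eq, abs_lt]; constructor <;> linarith)
  have u2 := hδ' _ (hgrid _ mem2) t ht (by rw [Real.dist_eq, abs_lt]; constructor <;> linarith)
  rw [Real.dist_eq, abs_lt] at u1 u2
  rw [abs_le]
  constructor <;> linarith [n1.1, n1.2, n2.1, n2.2, u1.1, u1.2, u2.1, u2.2]

theorem mul_log_sub_add_one_nonneg {b : ℝ} (hb : 0 ≤ b) : 0 ≤ b * Real.log b - b + 1 := by
  rcases hb.eq_or_lt with rfl | hb
  · simp
  · have h := mul_le_mul_of_nonneg_left (Real.one_sub_inv_le_log_of_pos hb) hb.le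
    rw [mul_sub, mul_inv_cancel₀ hb.ne'] at h
    linarith

theorem mul_le_mul_log_sub_add_exp (x : ℝ) {b : ℝ} (hb : 0 ≤ b) :
    x * b ≤ b * Real.log b - b + Real.exp x := by
  rcases hb.eq_or_lt with rfl | hb
  · simpa using (Real.exp_pos x).le
  · have h := mul_le_mul_of_nonneg_left (Real.add_one_le_exp (x - Real.log b)) hb.le
    rw [Real.exp_sub, Real.exp_log hb, mul_div_cancel₀ _ hb.ne'] at h
    linarith

theorem exp_sub_one_sub_le {x : ℝ} (hx : 0 ≤ x) : Real.exp x - 1 - x ≤ x ^ 2 * Real.exp x := by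
  have h1 : Real.exp x * (1 - x) ≤ 1 := by
    have := mul_le_mul_of_nonneg_left (Real.one_sub_le_exp_neg x) (Real.exp_pos x).le
    rwa [← Real.exp_add, add_neg_cancel, Real.exp_zero] at this
  have h2 : x * (Real.exp x - 1) ≤ x * (x * Real.exp x) :=
    mul_le_mul_of_nonneg_left (by linarith) hx
  nlinarith

/-- Young's inequality for the entropy function `b * log b - b + 1`. -/
theorem mul_abs_sub_one_le {σ h b : ℝ} (hσ : 0 < σ) (hh : 0 ≤ h) (hb : 0 ≤ b) :
    h * |b - 1| ≤ (b * Real.log b - b + 1) / σ + σ * (h ^ 2 * Real.exp (σ * h)) := by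
  have hx : 0 ≤ σ * h := by positivity
  have key : (σ * h) * |b - 1| ≤ (b * Real.log b - b + 1) + (σ * h) ^ 2 * Real.exp (σ * h) := by
    have he := exp_sub_one_sub_le hx
    rcases abs_cases (b - 1) with ⟨h1, -⟩ | ⟨h1, -⟩
    · rw [h1]
      linarith [mul_le_mul_log_sub_add_exp (σ * h) hb]
    · rw [h1]
      have h2 := mul_le_mul_log_sub_add_exp (-(σ * h)) hb
      have h3 : σ * h ≤ Real.sinh (σ * h) := Real.self_le_sinh_iff.2 hx
      rw [Real.sinh_eq] at h3
      linarith
  calc h * |b - 1| = ((σ * h) * |b - 1|) / σ := by field_simp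
    _ ≤ ((b * Real.log b - b + 1) + (σ * h) ^ 2 * Real.exp (σ * h)) / σ := by gcongr
    _ = _ := by field_simp

section
variable {Ω : Type*} [MeasurableSpace Ω] {μ : Measure Ω}

theorem integrable_mul_log_sub_add_one {g : Ω → ℝ} (hg : Measurable g) (hg0 : ∀ q, 0 ≤ g q) {N : ℕ}
    (hN : ∫⁻ q, ENNReal.ofReal (g q * Real.log (g q) - g q + 1) ∂μ ≤ (N : ℝ≥0∞)) :
    Integrable (fun q => g q * Real.log (g q) - g q + 1) μ ∧
      ∫ q, (g q * Real.log (g q) - g q + 1) ∂μ ≤ N := by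
  have hm : Measurable fun q => g q * Real.log (g q) - g q + 1 := by fun_prop
  have hnn : 0 ≤ᵐ[μ] fun q => g q * Real.log (g q) - g q + 1 :=
    Eventually.of_forall fun q => mul_log_sub_add_one_nonneg (hg0 q)
  constructor
  · refine ⟨hm.aestronglyMeasurable, ?_⟩
    rw [hasFiniteIntegral_iff_ofReal hnn]
    exact hN.trans_lt (ENNReal.natCast_lt_top N)
  · rw [integral_eq_lintegral_of_nonneg_ae hnn hm.aestronglyMeasurable]
    exact ENNReal.toReal_le_of_le_ofReal (by positivity) (by simpa using hN)

theorem integrable_mul_abs_sub_one {g h : Ω → ℝ} (hg : Measurable g) (hg0 : ∀ q, 0 ≤ g q) {N : ℕ}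
    (hN : ∫⁻ q, ENNReal.ofReal (g q * Real.log (g q) - g q + 1) ∂μ ≤ (N : ℝ≥0∞))
    {σ : ℝ} (hσ : 0 < σ) (hm : AEStronglyMeasurable h μ) (hh : ∀ q, 0 ≤ h q)
    (hI : Integrable (fun q => h q ^ 2 * Real.exp (σ * h q)) μ) :
    Integrable (fun q => h q * |g q - 1|) μ ∧
      ∫ q, h q * |g q - 1| ∂μ ≤ N / σ + σ * ∫ q, h q ^ 2 * Real.exp (σ * h q) ∂μ := by
  obtain ⟨hl, hlN⟩ := integrable_mul_log_sub_add_one hg hg0 hN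
  have hb : Integrable (fun q => (g q * Real.log (g q) - g q + 1) / σ
      + σ * (h q ^ 2 * Real.exp (σ * h q))) μ := (hl.div_const σ).add (hI.const_mul σ)
  have hI' : Integrable (fun q => h q * |g q - 1|) μ := by
    refine hb.mono' (hm.mul (by fun_prop)) (Eventually.of_forall fun q => ?_)
    rw [Real.norm_of_nonneg (mul_nonneg (hh q) (abs_nonneg _))]
    exact mul_abs_sub_one_le hσ (hh q) (hg0 q)
  refine ⟨hI', (integral_mono hI' hb fun q => mul_abs_sub_one_le hσ (hh q) (hg0 q)).trans ?_⟩
  rw [integral_add (hl.div_const σ) (hI.const_mul σ), integral_div, integral_const_mul]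
  gcongr

/-- Square integrability together with exponential integrability on sets of finite measure. -/
theorem integrable_sq_mul_exp {h : Ω → ℝ} (hm : Measurable h) (hh : ∀ q, 0 ≤ h q) {p : ℝ}
    (hp : 2 ≤ p) (h2 : ∫⁻ q, ENNReal.ofReal (h q ^ 2) ∂μ < ⊤)
    (hexp : ∃ δ : ℝ, 0 < δ ∧ ∀ Γ : Set Ω, MeasurableSet Γ → μ Γ < ⊤ →
      ∫⁻ q in Γ, ENNReal.ofReal (Real.exp (δ * h q ^ p)) ∂μ < ⊤) {σ : ℝ} (hσ : 0 ≤ σ) :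
    Integrable (fun q => h q ^ 2 * Real.exp (σ * h q)) μ := by
  obtain ⟨δ, hδ, hΓ⟩ := hexp
  set Γ : Set Ω := {q | 1 ≤ h q} with hΓdef
  have hΓm : MeasurableSet Γ := measurableSet_le measurable_const hm
  have hΓfin : μ Γ < ⊤ := by
    refine lt_of_le_of_lt ?_ h2
    rw [← setLIntegral_one]
    refine (setLIntegral_mono (by fun_prop) fun q hq => ?_).trans (setLIntegral_le_lintegral Γ _)
    rw [ENNReal.one_le_ofReal]
    exact one_le_pow₀ hq
  have hM : Measurable fun q => h q ^ 2 * Real.exp (σ * h q) := by fun_prop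
  rw [← integrableOn_univ, ← Set.union_compl_self Γ, integrableOn_union]
  constructor
  · have hE : IntegrableOn (fun q => Real.exp (δ * h q ^ p)) Γ μ := by
      have hmp : Measurable fun q => Real.exp (δ * h q ^ p) :=
        ((hm.pow_const p).const_mul δ).exp
      refine ⟨hmp.aestronglyMeasurable, ?_⟩
      rw [hasFiniteIntegral_iff_ofReal (Eventually.of_forall fun q => (Real.exp_pos _).le)]
      exact hΓ Γ hΓm hΓfin
    refine (hE.const_mul (Real.exp ((σ + 2) ^ 2 / (4 * δ)))).mono' hM.aestronglyMeasurable ?_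
    filter_upwards [ae_restrict_mem hΓm] with q hq
    have hq1 : 1 ≤ h q := hq
    rw [Real.norm_of_nonneg (by positivity), ← Real.exp_add]
    have e1 : h q ^ 2 ≤ Real.exp (2 * h q) := by
      rw [two_mul, Real.exp_add, ← sq]
      exact pow_le_pow_left₀ (hh q) (by linarith [Real.add_one_le_exp (h q)]) 2
    refine (mul_le_mul_of_nonneg_right e1 (Real.exp_pos _).le).trans ?_
    rw [← Real.exp_add, Real.exp_le_exp]
    have e2 : h q ^ 2 ≤ h q ^ p := by
      rw [← Real.rpow_natCast]
      exact Real.rpow_le_rpow_of_exponent_le hq1 (by exact_mod_cast hp)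
    have e3 : (σ + 2) * h q ≤ (σ + 2) ^ 2 / (4 * δ) + δ * h q ^ 2 := by
      have : (σ + 2) ^ 2 / (4 * δ) + δ * h q ^ 2 - (σ + 2) * h q
          = (2 * δ * h q - (σ + 2)) ^ 2 / (4 * δ) := by field_simp; ring
      have h0 : 0 ≤ (2 * δ * h q - (σ + 2)) ^ 2 / (4 * δ) := by positivity
      linarith
    nlinarith
  · have hE : Integrable (fun q => h q ^ 2) μ := by
      refine ⟨by fun_prop, ?_⟩
      rwa [hasFiniteIntegral_iff_ofReal (Eventually.of_forall fun q => sq_nonneg _)]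
    refine (hE.integrableOn.mul_const (Real.exp σ)).mono' hM.aestronglyMeasurable ?_
    filter_upwards [ae_restrict_mem hΓm.compl] with q hq
    have hq1 : h q < 1 := not_le.1 hq
    rw [Real.norm_of_nonneg (by positivity)]
    gcongr
    nlinarith

theorem integrableOn_of_entropy {g : Ω → ℝ} (hg : Measurable g) (hg0 : ∀ q, 0 ≤ g q) {N : ℕ}
    (hN : ∫⁻ q, ENNReal.ofReal (g q * Real.log (g q) - g q + 1) ∂μ ≤ (N : ℝ≥0∞))
    {B : Set Ω} (hBfin : μ B < ⊤) : IntegrableOn g B μ := by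
  have hl := (integrable_mul_log_sub_add_one hg hg0 hN).1.integrableOn (s := B)
  have hc : IntegrableOn (fun _ => (1 + Real.exp 1 : ℝ)) B μ := integrableOn_const hBfin.ne
  refine (hl.add hc).mono' hg.aestronglyMeasurable (Eventually.of_forall fun q => ?_)
  rw [Real.norm_of_nonneg (hg0 q)]
  have := mul_le_mul_log_sub_add_exp 1 (hg0 q)
  simp only [Pi.add_apply]
  linarith

end

section
variable {Ω : Type*} [TopologicalSpace Ω] [NormalSpace Ω] [R1Space Ω] [WeaklyLocallyCompactSpace Ω]
  [MeasurableSpace Ω] [BorelSpace Ω] {μ : Measure Ω} [μ.Regular]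

/-- Vague convergence of densities with bounded entropy implies convergence of the integrals over
every measurable set of finite measure. -/
theorem tendsto_setIntegral_of_entropy {gn : ℕ → Ω → ℝ} {g : Ω → ℝ} {N : ℕ}
    (hgn : ∀ n, Measurable (gn n) ∧ (∀ q, 0 ≤ gn n q) ∧
      (∫⁻ q, ENNReal.ofReal (gn n q * Real.log (gn n q) - gn n q + 1) ∂μ) ≤ (N : ℝ≥0∞))
    (hg : Measurable g ∧ (∀ q, 0 ≤ g q) ∧
      (∫⁻ q, ENNReal.ofReal (g q * Real.log (g q) - g q + 1) ∂μ) ≤ (N : ℝ≥0∞))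
    (hconv : ∀ φ : Ω → ℝ, Continuous φ → HasCompactSupport φ →
      Tendsto (fun n => ∫ q, φ q * gn n q ∂μ) atTop (nhds (∫ q, φ q * g q ∂μ)))
    {B : Set Ω} (hB : MeasurableSet B) (hBfin : μ B < ⊤) :
    Tendsto (fun n => ∫ q in B, gn n q ∂μ) atTop (nhds (∫ q in B, g q ∂μ)) := by
  rw [Metric.tendsto_atTop]
  intro ε hε
  set σ : ℝ := (N + 1) * (8 / ε) with hσdef
  have hσ : 0 < σ := by positivity
  set η : ℝ := ε / (8 * (σ * Real.exp σ)) with hηdef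
  have hη : 0 < η := by positivity
  have hind : Integrable (B.indicator fun _ => (1 : ℝ)) μ :=
    (integrable_indicator_iff hB).2 (integrableOn_const hBfin.ne)
  obtain ⟨ψ₀, hψ₀c, hψ₀η, hψ₀cont, hψ₀I⟩ := hind.exists_hasCompactSupport_integral_sub_le hη
  set ψ : Ω → ℝ := fun q => max 0 (min 1 (ψ₀ q)) with hψ
  have hψcont : Continuous ψ := by fun_prop
  have hψc : HasCompactSupport ψ := by
    refine hψ₀c.comp_left (g := fun x : ℝ => max 0 (min 1 x)) ?_
    simp
  set d : Ω → ℝ := fun q => |B.indicator (fun _ => (1 : ℝ)) q - ψ q| with hd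
  have hdle : ∀ q, d q ≤ |B.indicator (fun _ => (1 : ℝ)) q - ψ₀ q| := by
    intro q
    have h01 : B.indicator (fun _ => (1 : ℝ)) q = max 0 (min 1 (B.indicator (fun _ => (1 : ℝ)) q)) := by
      by_cases hq : q ∈ B <;> simp [hq]
    simp only [hd, hψ]
    conv_lhs => rw [h01]
    have h1 := abs_max_sub_max_le_max (0 : ℝ) (min 1 (B.indicator (fun _ => (1 : ℝ)) q)) 0
      (min 1 (ψ₀ q))
    have h2 := abs_min_sub_min_le_max (1 : ℝ) (B.indicator (fun _ => (1 : ℝ)) q) 1 (ψ₀ q)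
    simp only [sub_self, abs_zero, abs_nonneg, max_eq_right] at h1 h2
    exact h1.trans h2
  have hd1 : ∀ q, d q ≤ 1 := by
    intro q
    have h0 : 0 ≤ ψ q := le_max_left _ _
    have h1 : ψ q ≤ 1 := max_le zero_le_one (min_le_left _ _)
    simp only [hd]
    by_cases hq : q ∈ B <;> simp only [hq, Set.indicator_of_mem, Set.indicator_of_notMem,
      not_false_eq_true] <;> rw [abs_le] <;> constructor <;> linarith
  have hd0 : ∀ q, 0 ≤ d q := fun q => abs_nonneg _
  have hindm : Measurable (B.indicator fun _ => (1 : ℝ)) := measurable_const.indicator hB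
  have hdm : Measurable d := (hindm.sub hψcont.measurable).abs
  have hdI : Integrable d μ := (hind.sub hψ₀I).abs.mono' hdm.aestronglyMeasurable
    (Eventually.of_forall fun q => by rw [Real.norm_of_nonneg (hd0 q)]; exact hdle q)
  have hdη : ∫ q, d q ∂μ ≤ η :=
    (integral_mono hdI (hind.sub hψ₀I).abs hdle).trans hψ₀η
  have hsqle : ∀ q, d q ^ 2 * Real.exp (σ * d q) ≤ d q * Real.exp σ := by
    intro q
    have h1 : d q ^ 2 ≤ d q := by nlinarith [hd0 q, hd1 q]
    have h2 : Real.exp (σ * d q) ≤ Real.exp σ := Real.exp_le_exp.2 (by nlinarith [hd1 q])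
    exact mul_le_mul h1 h2 (Real.exp_pos _).le (hd0 q)
  have hsqI : Integrable (fun q => d q ^ 2 * Real.exp (σ * d q)) μ :=
    (hdI.mul_const (Real.exp σ)).mono' (by fun_prop) (Eventually.of_forall fun q => by
      rw [Real.norm_of_nonneg (by positivity)]; exact hsqle q)
  have hsqη : σ * ∫ q, d q ^ 2 * Real.exp (σ * d q) ∂μ ≤ ε / 8 := by
    have := (integral_mono hsqI (hdI.mul_const (Real.exp σ)) hsqle)
    rw [integral_mul_const] at this
    calc σ * ∫ q, d q ^ 2 * Real.exp (σ * d q) ∂μ ≤ σ * (η * Real.exp σ) := by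
          gcongr
          exact this.trans (by gcongr)
      _ = ε / 8 := by rw [hηdef]; field_simp
  have hNσ : (N : ℝ) / σ ≤ ε / 8 := by
    rw [hσdef, div_le_iff₀ (by positivity)]
    field_simp
    linarith
  have happrox : ∀ k : Ω → ℝ, Measurable k → (∀ q, 0 ≤ k q) →
      (∫⁻ q, ENNReal.ofReal (k q * Real.log (k q) - k q + 1) ∂μ) ≤ (N : ℝ≥0∞) →
      |(∫ q in B, k q ∂μ) - ∫ q, ψ q * k q ∂μ
        - ∫ q, (B.indicator (fun _ => (1 : ℝ)) q - ψ q) ∂μ| ≤ ε / 4 := by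
    intro k hkm hk0 hkN
    obtain ⟨hI, hle⟩ := integrable_mul_abs_sub_one hkm hk0 hkN hσ hdm.aestronglyMeasurable hd0 hsqI
    have hBk : Integrable (fun q => B.indicator (fun _ => (1 : ℝ)) q * k q) μ := by
      have := (integrable_indicator_iff hB).2 (integrableOn_of_entropy hkm hk0 hkN hBfin)
      refine this.congr (Eventually.of_forall fun q => ?_)
      by_cases hq : q ∈ B <;> simp [hq]
    have hψI : Integrable ψ μ := hψcont.integrable_of_hasCompactSupport hψc
    have hdk : Integrable (fun q => (B.indicator (fun _ => (1 : ℝ)) q - ψ q) * (k q - 1)) μ := by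
      refine hI.mono' ((hindm.sub hψcont.measurable).mul
        (hkm.sub measurable_const)).aestronglyMeasurable (Eventually.of_forall fun q => ?_)
      rw [Real.norm_eq_abs, abs_mul]
    have hψk : Integrable (fun q => ψ q * k q) μ := by
      refine ((hBk.sub hdk).sub (hind.sub hψI)).congr (Eventually.of_forall fun q => ?_)
      simp only [Pi.sub_apply]
      ring
    have e1 : ∫ q in B, k q ∂μ = ∫ q, B.indicator (fun _ => (1 : ℝ)) q * k q ∂μ := by
      rw [← integral_indicator hB]
      refine integral_congr_ae (Eventually.of_forall fun q => ?_)
      by_cases hq : q ∈ B <;> simp [hq]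
    have e2 : (∫ q in B, k q ∂μ) - ∫ q, ψ q * k q ∂μ
        - ∫ q, (B.indicator (fun _ => (1 : ℝ)) q - ψ q) ∂μ
        = ∫ q, (B.indicator (fun _ => (1 : ℝ)) q - ψ q) * (k q - 1) ∂μ := by
      rw [e1, ← integral_sub hBk hψk]
      refine (integral_sub (hBk.sub hψk) (hind.sub hψI)).symm.trans ?_
      refine integral_congr_ae (Eventually.of_forall fun q => ?_)
      simp only [Pi.sub_apply]
      ring
    rw [e2]
    refine abs_integral_le_integral_abs.trans ?_
    simp only [abs_mul]
    linarith
  obtain ⟨n₀, hn₀⟩ := Metric.tendsto_atTop.1 (hconv ψ hψcont hψc) (ε / 4) (by positivity)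
  refine ⟨n₀, fun n hn => ?_⟩
  have a1 := abs_le.1 (happrox (gn n) (hgn n).1 (hgn n).2.1 (hgn n).2.2)
  have a2 := abs_le.1 (happrox g hg.1 hg.2.1 hg.2.2)
  have a3 := hn₀ n hn
  rw [Real.dist_eq, abs_lt] at a3 ⊢
  constructor <;> linarith [a1.1, a1.2, a2.1, a2.2, a3.1, a3.2]

end

theorem lintegral_lintegral_window_fst_le {T h : ℝ} (hh : 0 ≤ h) (φ : ℝ → ℝ≥0∞) :
    ∫⁻ s in Set.Icc h T, ∫⁻ _ in Set.Icc (s - h) s, φ s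
      ≤ ENNReal.ofReal h * ∫⁻ s in Set.Icc 0 T, φ s := by
  simp only [lintegral_const, Measure.restrict_apply, MeasurableSet.univ, Set.univ_inter,
    Real.volume_Icc, sub_sub_cancel]
  rw [lintegral_mul_const' _ _ ENNReal.ofReal_ne_top, mul_comm]
  gcongr

theorem lintegral_lintegral_window_snd_le {T h : ℝ} {φ : ℝ → ℝ≥0∞}
    (hφ : AEMeasurable φ (volume.restrict (Set.Icc 0 T))) :
    ∫⁻ s in Set.Icc h T, ∫⁻ r in Set.Icc (s - h) s, φ r
      ≤ ENNReal.ofReal h * ∫⁻ s in Set.Icc 0 T, φ s := by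
  have hS : MeasurableSet {q : ℝ × ℝ | q.1 - h ≤ q.2 ∧ q.2 ≤ q.1} :=
    (measurableSet_le (measurable_fst.sub_const h) measurable_snd).inter
      (measurableSet_le measurable_snd measurable_fst)
  have h1 : ∫⁻ s in Set.Icc h T, ∫⁻ r in Set.Icc (s - h) s, φ r
      = ∫⁻ s in Set.Icc h T, ∫⁻ r in Set.Icc 0 T,
        {q : ℝ × ℝ | q.1 - h ≤ q.2 ∧ q.2 ≤ q.1}.indicator (fun q => φ q.2) (s, r) := by
    refine setLIntegral_congr_fun measurableSet_Icc fun s hs => ?_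
    have hsub : Set.Icc (s - h) s ⊆ Set.Icc 0 T :=
      Set.Icc_subset_Icc (by linarith [hs.1]) hs.2
    have : ∀ r, {q : ℝ × ℝ | q.1 - h ≤ q.2 ∧ q.2 ≤ q.1}.indicator (fun q => φ q.2) (s, r)
        = (Set.Icc (s - h) s).indicator φ r := fun r => rfl
    simp only [this]
    rw [lintegral_indicator measurableSet_Icc, Measure.restrict_restrict measurableSet_Icc,
      Set.inter_eq_left.2 hsub]
  rw [h1, lintegral_lintegral_swap]
  · rw [← lintegral_const_mul' _ _ ENNReal.ofReal_ne_top]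
    refine lintegral_mono fun r => ?_
    have : ∀ s, {q : ℝ × ℝ | q.1 - h ≤ q.2 ∧ q.2 ≤ q.1}.indicator (fun q => φ q.2) (s, r)
        = (Set.Icc r (r + h)).indicator (fun _ => φ r) s := by
      intro s
      by_cases hs : s ∈ Set.Icc r (r + h)
      · rw [Set.indicator_of_mem hs, Set.indicator_of_mem]
        exact ⟨by linarith [hs.2], hs.1⟩
      · rw [Set.indicator_of_notMem hs, Set.indicator_of_notMem]
        exact fun hq => hs ⟨hq.2, by linarith [hq.1]⟩
    simp only [this]
    refine (setLIntegral_le_lintegral _ _).trans ?_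
    rw [lintegral_indicator measurableSet_Icc, setLIntegral_const, Real.volume_Icc, mul_comm]
    simp
  · exact (hφ.comp_snd).indicator hS

/-- Averaged continuity of translations in `L^α`. -/
theorem exists_lintegral_window_norm_sub_rpow_le {V : Type*} [NormedAddCommGroup V]
    [NormedSpace ℝ V] {T α : ℝ} (hT : 0 < T) (hα : 0 < α) {u : ℝ → V}
    (hu : MemLp u (ENNReal.ofReal α) (volume.restrict (Set.Icc 0 T))) {ε : ℝ} (hε : 0 < ε) :
    ∃ η > 0, ∀ h, 0 < h → h < η →
      ∫⁻ s in Set.Icc h T, ∫⁻ r in Set.Icc (s - h) s, ENNReal.ofReal (‖u s - u r‖ ^ α)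
        ≤ ENNReal.ofReal (ε * h) := by
  set e : ℝ := ε / (3 ^ α * (2 + T)) with he
  have he0 : 0 < e := by positivity
  obtain ⟨c, hcs, hce, hcc, hcm⟩ := hu.exists_hasCompactSupport_integral_rpow_sub_le hα he0
  have huc := hcc.uniformContinuous_of_tendsto_cocompact (x := 0) (hcs.is_zero_at_infty)
  obtain ⟨η, hη, hη'⟩ := Metric.uniformContinuous_iff.1 huc (e ^ (1 / α)) (by positivity)
  refine ⟨η, hη, fun h hh hhη => ?_⟩
  set φ : ℝ → ℝ≥0∞ := fun s => ENNReal.ofReal (‖u s - c s‖ ^ α) with hφ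
  have hφm : AEMeasurable φ (volume.restrict (Set.Icc 0 T)) :=
    (((hu.1.sub hcm.1).norm.aemeasurable).pow_const α).ennreal_ofReal
  have hφI : ∫⁻ s in Set.Icc 0 T, φ s ≤ ENNReal.ofReal e := by
    have hI : Integrable (fun s => ‖u s - c s‖ ^ α) (volume.restrict (Set.Icc 0 T)) := by
      have := (hu.sub hcm).integrable_norm_rpow (by simpa using hα) ENNReal.ofReal_ne_top
      simpa [ENNReal.toReal_ofReal hα.le] using this
    rw [hφ, ← ofReal_integral_eq_lintegral_ofReal hI
      (Eventually.of_forall fun s => by positivity)]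
    exact ENNReal.ofReal_le_ofReal hce
  have hpt : ∀ s r, |s - r| ≤ h → ENNReal.ofReal (‖u s - u r‖ ^ α)
      ≤ ENNReal.ofReal (3 ^ α) * ((φ s + φ r) + ENNReal.ofReal e) := by
    intro s r hsr
    have hc : ‖c s - c r‖ ^ α ≤ e := by
      have h1 : ‖c s - c r‖ ≤ e ^ (1 / α) := by
        rw [← dist_eq_norm]
        exact (hη' (by rw [Real.dist_eq]; linarith)).le
      calc ‖c s - c r‖ ^ α ≤ (e ^ (1 / α)) ^ α := by gcongr
        _ = e := by rw [← Real.rpow_mul he0.le]; field_simp; simp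
    have hreal : ‖u s - u r‖ ^ α
        ≤ 3 ^ α * ((‖u s - c s‖ ^ α + ‖u r - c r‖ ^ α) + e) := by
      set m := max (max ‖u s - c s‖ ‖u r - c r‖) ‖c s - c r‖ with hm
      have hm0 : 0 ≤ m := (norm_nonneg _).trans (le_max_right _ _)
      have h3 : ‖u s - u r‖ ≤ 3 * m := by
        have e1 : u s - u r = (u s - c s) - (u r - c r) + (c s - c r) := by abel
        have e2 := norm_add_le ((u s - c s) - (u r - c r)) (c s - c r)
        have e3 := norm_sub_le (u s - c s) (u r - c r)
        have e4 : ‖u s - c s‖ ≤ m := (le_max_left _ _).trans (le_max_left _ _)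
        have e5 : ‖u r - c r‖ ≤ m := (le_max_right _ _).trans (le_max_left _ _)
        have e6 : ‖c s - c r‖ ≤ m := le_max_right _ _
        rw [e1]
        linarith
      have h4 : m ^ α ≤ (‖u s - c s‖ ^ α + ‖u r - c r‖ ^ α) + e := by
        have p1 : 0 ≤ ‖u s - c s‖ ^ α := by positivity
        have p2 : 0 ≤ ‖u r - c r‖ ^ α := by positivity
        rw [hm]
        rcases max_choice (max ‖u s - c s‖ ‖u r - c r‖) ‖c s - c r‖ with h | h <;> rw [h]
        · rcases max_choice ‖u s - c s‖ ‖u r - c r‖ with h | h <;> rw [h] <;> linarith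
        · linarith
      calc ‖u s - u r‖ ^ α ≤ (3 * m) ^ α := by gcongr
        _ = 3 ^ α * m ^ α := Real.mul_rpow (by norm_num) hm0
        _ ≤ _ := by gcongr
    refine (ENNReal.ofReal_le_ofReal hreal).trans (le_of_eq ?_)
    rw [ENNReal.ofReal_mul (by positivity), ENNReal.ofReal_add (by positivity) he0.le,
      ENNReal.ofReal_add (by positivity) (by positivity)]
  calc ∫⁻ s in Set.Icc h T, ∫⁻ r in Set.Icc (s - h) s, ENNReal.ofReal (‖u s - u r‖ ^ α)
      ≤ ∫⁻ s in Set.Icc h T, ∫⁻ r in Set.Icc (s - h) s,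
          ENNReal.ofReal (3 ^ α) * ((φ s + φ r) + ENNReal.ofReal e) := by
        refine lintegral_mono fun s => setLIntegral_mono' measurableSet_Icc fun r hr => hpt s r ?_
        rw [abs_le]
        constructor <;> linarith [hr.1, hr.2]
    _ = ENNReal.ofReal (3 ^ α) * ∫⁻ s in Set.Icc h T, ((∫⁻ _ in Set.Icc (s - h) s, φ s)
          + (∫⁻ r in Set.Icc (s - h) s, φ r) + ∫⁻ _ in Set.Icc (s - h) s, ENNReal.ofReal e) := by
        rw [← lintegral_const_mul' _ _ ENNReal.ofReal_ne_top]
        refine lintegral_congr fun s => ?_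
        rw [lintegral_const_mul' _ _ ENNReal.ofReal_ne_top,
          lintegral_add_right _ measurable_const, lintegral_add_left measurable_const]
    _ ≤ ENNReal.ofReal (3 ^ α) * ((ENNReal.ofReal h * ENNReal.ofReal e
          + ENNReal.ofReal h * ENNReal.ofReal e)
          + ENNReal.ofReal h * (ENNReal.ofReal e * ENNReal.ofReal T)) := by
        gcongr
        have hc1 : Measurable fun s : ℝ => ∫⁻ _ in Set.Icc (s - h) s, ENNReal.ofReal e := by
          simp only [setLIntegral_const, Real.volume_Icc, sub_sub_cancel]
          fun_prop
        have hc2 : AEMeasurable (fun s : ℝ => ∫⁻ _ in Set.Icc (s - h) s, φ s)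
            (volume.restrict (Set.Icc h T)) := by
          simp only [setLIntegral_const, Real.volume_Icc, sub_sub_cancel]
          exact (hφm.mono_measure (Measure.restrict_mono
            (Set.Icc_subset_Icc hh.le le_rfl) le_rfl)).mul_const _
        rw [lintegral_add_right _ hc1, lintegral_add_left' hc2]
        gcongr
        · exact (lintegral_lintegral_window_fst_le hh.le φ).trans (by gcongr)
        · exact (lintegral_lintegral_window_snd_le hφm).trans (by gcongr)
        · refine (lintegral_lintegral_window_fst_le hh.le fun _ => ENNReal.ofReal e).trans ?_
          simp [Real.volume_Icc]
    _ = ENNReal.ofReal (ε * h) := by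
        rw [← ENNReal.ofReal_mul he0.le, ← ENNReal.ofReal_mul hh.le, ← ENNReal.ofReal_mul hh.le,
          ← ENNReal.ofReal_add (by positivity) (by positivity),
          ← ENNReal.ofReal_add (by positivity) (by positivity),
          ← ENNReal.ofReal_mul (by positivity)]
        congr 1
        rw [he]
        field_simp
        ring

theorem integral_le_of_lintegral_ofReal_le {Ω : Type*} [MeasurableSpace Ω] {μ : Measure Ω}
    {f : Ω → ℝ} {c : ℝ} (hf : Integrable f μ) (hc : 0 ≤ c)
    (h : ∫⁻ q, ENNReal.ofReal (f q) ∂μ ≤ ENNReal.ofReal c) : ∫ q, f q ∂μ ≤ c := by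
  rw [integral_eq_lintegral_pos_part_sub_lintegral_neg_part hf]
  have h1 := ENNReal.toReal_le_of_le_ofReal hc h
  have h2 : 0 ≤ (∫⁻ q, ENNReal.ofReal (-f q) ∂μ).toReal := ENNReal.toReal_nonneg
  linarith

section
variable {H V : Type*} [NormedAddCommGroup H] [InnerProductSpace ℝ H]
  [NormedAddCommGroup V] [NormedSpace ℝ V] [MeasurableSpace V] [BorelSpace V]

theorem intervalIntegrable_comp_of_growth {T α : ℝ} (hT : 0 ≤ T) {i : V →L[ℝ] H}
    {D : ℝ → V → ℝ} {Φ b : ℝ → ℝ}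
    (hDm : Measurable fun q : ℝ × V => D q.1 q.2)
    (hΦ : IntegrableOn Φ (Set.Icc 0 T)) (hb : IntegrableOn b (Set.Icc 0 T)) (hb0 : ∀ r, 0 ≤ b r)
    (hD0 : ∀ r, D r 0 = 0)
    (hD : ∀ κ > 0, ∃ c ≥ 0, ∀ᵐ r ∂(volume.restrict (Set.Icc 0 T)), ∀ v w : V,
      |D r v - D r w| ≤ κ * Φ r + c * ‖v - w‖ ^ α + b r * ‖i v - i w‖)
    {v : ℝ → V} (hv : StronglyMeasurable v)
    (hvα : IntegrableOn (fun r => ‖v r‖ ^ α) (Set.Icc 0 T)) {M : ℝ}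
    (hM : ∀ᵐ r ∂(volume.restrict (Set.Icc 0 T)), ‖i (v r)‖ ≤ M) :
    IntervalIntegrable (fun r => D r (v r)) volume 0 T := by
  rw [intervalIntegrable_iff_integrableOn_Icc_of_le hT]
  obtain ⟨c, hc, hD'⟩ := hD 1 one_pos
  have hm : Measurable fun r => D r (v r) :=
    hDm.comp (measurable_id.prodMk hv.measurable)
  refine ((hΦ.add (hvα.const_mul c)).add (hb.mul_const M)).mono' hm.aestronglyMeasurable ?_
  filter_upwards [hD', hM] with r hr hrM
  have h := hr (v r) 0
  rw [hD0, sub_zero, sub_zero, map_zero, sub_zero, one_mul] at h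
  rw [Real.norm_eq_abs]
  have := mul_le_mul_of_nonneg_left hrM (hb0 r)
  simp only [Pi.add_apply]
  linarith

/-- Energy inequality for a weak evolution equation `X' = D(u)` in a Gelfand triple. -/
theorem norm_sq_le_add_integral {T α : ℝ} (hT : 0 < T) (hα : 1 < α) {i : V →L[ℝ] H}
    {X : ℝ → H} {u : ℝ → V} {x : H} {D : ℝ → V → ℝ} {Φ b : ℝ → ℝ}
    (hXc : ContinuousOn X (Set.Icc 0 T)) (hu : StronglyMeasurable u)
    (hiu : ∀ᵐ t ∂(volume.restrict (Set.Icc 0 T)), i (u t) = X t)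
    (huα : IntegrableOn (fun r => ‖u r‖ ^ α) (Set.Icc 0 T))
    (hDm : Measurable fun q : ℝ × V => D q.1 q.2)
    (hΦ : IntegrableOn Φ (Set.Icc 0 T)) (hΦ0 : ∀ r, 0 ≤ Φ r)
    (hb : IntegrableOn b (Set.Icc 0 T)) (hb0 : ∀ r, 0 ≤ b r)
    (hD0 : ∀ r, D r 0 = 0)
    (hD : ∀ κ > 0, ∃ c ≥ 0, ∀ᵐ r ∂(volume.restrict (Set.Icc 0 T)), ∀ v w : V,
      |D r v - D r w| ≤ κ * Φ r + c * ‖v - w‖ ^ α + b r * ‖i v - i w‖)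
    (heq : ∀ t ∈ Set.Icc 0 T, ∀ v : V, ⟪X t, i v⟫ = ⟪x, i v⟫ + ∫ s in (0 : ℝ)..t, D s v) :
    IntervalIntegrable (fun r => D r (u r)) volume 0 T ∧
    ∀ t ∈ Set.Icc 0 T, ‖X t‖ ^ 2 ≤ ‖X 0‖ ^ 2 + 2 * ∫ r in (0 : ℝ)..t, D r (u r) := by
  have hα0 : 0 < α := by linarith
  obtain ⟨MX, hMX⟩ := isCompact_Icc.exists_bound_of_continuousOn hXc
  have hIu : IntervalIntegrable (fun r => D r (u r)) volume 0 T := by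
    refine intervalIntegrable_comp_of_growth (M := MX) hT.le hDm hΦ hb hb0 hD0 hD hu huα ?_
    filter_upwards [hiu, ae_restrict_mem measurableSet_Icc] with r hr hr'
    rw [hr]
    exact hMX r hr'
  have hIv : ∀ v : V, IntervalIntegrable (fun r => D r v) volume 0 T := fun v =>
    intervalIntegrable_comp_of_growth (M := ‖i v‖) hT.le hDm hΦ hb hb0 hD0 hD
      (v := fun _ => v) stronglyMeasurable_const (integrableOn_const (by simp [Real.volume_Icc]))
      (Eventually.of_forall fun _ => le_rfl)
  refine ⟨hIu, fun t ht => ?_⟩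
  have hsubI : ∀ {F : ℝ → ℝ}, IntervalIntegrable F volume 0 T → ∀ a ∈ Set.Icc 0 T,
      ∀ c ∈ Set.Icc 0 T, IntervalIntegrable F volume a c := by
    intro F hF a ha c hc
    refine hF.mono_set ?_
    rw [Set.uIcc_of_le hT.le]
    exact Set.uIcc_subset_Icc ha hc
  set P : ℝ → ℝ := fun s => ‖X s‖ ^ 2 - 2 * ∫ r in (0 : ℝ)..s, D r (u r) with hP
  have hPc : ContinuousOn P (Set.Icc 0 T) := by
    have := (hIu.absolutelyContinuousOnInterval_intervalIntegral (c := 0) (by simp)).continuousOn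
    rw [Set.uIcc_of_le hT.le] at this
    exact (hXc.norm.pow 2).sub (this.const_smul (2 : ℝ))
  suffices hgoal : P t ≤ P 0 by
    simp only [hP, intervalIntegral.integral_same] at hgoal
    linarith
  rcases ht.1.eq_or_lt with h0 | ht0
  · rw [← h0]
  have hPI : ∀ a ∈ Set.Icc 0 T, ∀ c ∈ Set.Icc 0 T, IntervalIntegrable P volume a c := by
    intro a ha c hc
    exact (hPc.mono (Set.uIcc_subset_Icc ha hc)).intervalIntegrable
  have hincr : ∀ h > 0, ∀ᵐ s ∂(volume.restrict (Set.Icc h T)),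
      ENNReal.ofReal (P s - P (s - h)) ≤ 2 * ∫⁻ r in Set.Icc (s - h) s,
        ENNReal.ofReal |D r (u s) - D r (u r)| := by
    intro h hh
    filter_upwards [ae_restrict_of_ae_restrict_of_subset
      (Set.Icc_subset_Icc hh.le le_rfl) hiu, ae_restrict_mem measurableSet_Icc] with s hs hsm
    have hs1 : s ∈ Set.Icc 0 T := ⟨hh.le.trans hsm.1, hsm.2⟩
    have hs2 : s - h ∈ Set.Icc 0 T := ⟨by linarith [hsm.1], by linarith [hsm.2]⟩
    have z1 : (0 : ℝ) ∈ Set.Icc 0 T := ⟨le_rfl, hT.le⟩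
    have e1 : ⟪X s, X s⟫ - ⟪X (s - h), X s⟫ = ∫ r in (s - h)..s, D r (u s) := by
      have a1 := heq s hs1 (u s)
      have a2 := heq (s - h) hs2 (u s)
      rw [hs] at a1 a2
      rw [a1, a2, ← intervalIntegral.integral_interval_sub_left (hsubI (hIv _) 0 z1 s hs1)
        (hsubI (hIv _) 0 z1 _ hs2)]
      ring
    have e2 : (∫ r in (0 : ℝ)..s, D r (u r)) - ∫ r in (0 : ℝ)..(s - h), D r (u r)
        = ∫ r in (s - h)..s, D r (u r) :=
      intervalIntegral.integral_interval_sub_left (hsubI hIu 0 z1 s hs1) (hsubI hIu 0 z1 _ hs2)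
    have e3 : ‖X s‖ ^ 2 - ‖X (s - h)‖ ^ 2 ≤ 2 * (⟪X s, X s⟫ - ⟪X (s - h), X s⟫) := by
      have := norm_sub_sq_real (X (s - h)) (X s)
      rw [real_inner_self_eq_norm_sq]
      nlinarith [sq_nonneg ‖X (s - h) - X s‖]
    have e4 : P s - P (s - h) ≤ 2 * ∫ r in (s - h)..s, (D r (u s) - D r (u r)) := by
      rw [intervalIntegral.integral_sub (hsubI (hIv _) _ hs2 s hs1) (hsubI hIu _ hs2 s hs1)]
      simp only [hP]
      linarith
    refine (ENNReal.ofReal_le_ofReal e4).trans ?_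
    rw [ENNReal.ofReal_mul zero_le_two, ENNReal.ofReal_ofNat]
    gcongr
    rw [intervalIntegral.integral_of_le (by linarith), ← integral_Icc_eq_integral_Ioc]
    refine (ENNReal.ofReal_le_ofReal (le_abs_self _)).trans ?_
    simpa only [Real.enorm_eq_ofReal_abs] using enorm_integral_le_lintegral_enorm
      (μ := volume.restrict (Set.Icc (s - h) s)) (fun r => D r (u s) - D r (u r))
  refine le_of_forall_pos_le_add fun ε hε => ?_
  set IΦ : ℝ := ∫ r in Set.Icc 0 T, Φ r with hIΦ
  set Ib : ℝ := ∫ r in Set.Icc 0 T, b r with hIb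
  have hIΦ0 : 0 ≤ IΦ := integral_nonneg hΦ0
  have hIb0 : 0 ≤ Ib := integral_nonneg hb0
  set e : ℝ := ε / 8 with he
  have he0 : 0 < e := by positivity
  obtain ⟨c, hc0, hDc⟩ := hD (e / (IΦ + 1)) (by positivity)
  obtain ⟨η₁, hη₁, hwin⟩ := exists_lintegral_window_norm_sub_rpow_le hT hα0 (u := u)
    (by
      rw [← integrable_norm_rpow_iff hu.aestronglyMeasurable (by simpa using hα0)
        ENNReal.ofReal_ne_top, ENNReal.toReal_ofReal hα0.le]
      exact huα) (ε := e / (c + 1)) (by positivity)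
  obtain ⟨η₂, hη₂, hXuc⟩ := Metric.uniformContinuousOn_iff.1
    (isCompact_Icc.uniformContinuousOn_of_continuous hXc) (e / (Ib + 1)) (by positivity)
  obtain ⟨η₃, hη₃, hPuc⟩ := Metric.uniformContinuousOn_iff.1
    (isCompact_Icc.uniformContinuousOn_of_continuous hPc) e he0
  obtain ⟨h, hh, hlt⟩ : ∃ h > 0, h < min (min η₁ η₂) (min η₃ t) :=
    exists_between (lt_min (lt_min hη₁ hη₂) (lt_min hη₃ ht0))
  have hh1 : h < η₁ := hlt.trans_le ((min_le_left _ _).trans (min_le_left _ _))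
  have hh2 : h < η₂ := hlt.trans_le ((min_le_left _ _).trans (min_le_right _ _))
  have hh3 : h < η₃ := hlt.trans_le ((min_le_right _ _).trans (min_le_left _ _))
  have hht : h < t := hlt.trans_le ((min_le_right _ _).trans (min_le_right _ _))
  have hmeasW : Measurable fun q : ℝ × ℝ => ENNReal.ofReal (‖u q.1 - u q.2‖ ^ α) := by
    have : Measurable fun q : ℝ × ℝ => u q.1 - u q.2 :=
      ((hu.comp_measurable measurable_fst).sub (hu.comp_measurable measurable_snd)).measurable
    exact (this.norm.pow_const α).ennreal_ofReal
  have hinner : ∀ᵐ s ∂(volume.restrict (Set.Icc h T)),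
      ENNReal.ofReal (P s - P (s - h)) ≤ 2 * (
        (∫⁻ r in Set.Icc (s - h) s, ENNReal.ofReal c * ENNReal.ofReal (‖u s - u r‖ ^ α))
        + ∫⁻ r in Set.Icc (s - h) s, (ENNReal.ofReal (e / (IΦ + 1)) * ENNReal.ofReal (Φ r)
          + ENNReal.ofReal (e / (Ib + 1)) * ENNReal.ofReal (b r))) := by
    filter_upwards [hincr h hh, ae_restrict_of_ae_restrict_of_subset
      (Set.Icc_subset_Icc hh.le le_rfl) hiu, ae_restrict_mem measurableSet_Icc] with s hs hsX hsm
    refine hs.trans ?_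
    gcongr
    have hms : Measurable fun r => ENNReal.ofReal c * ENNReal.ofReal (‖u s - u r‖ ^ α) :=
      (hmeasW.comp (measurable_const.prodMk measurable_id)).const_mul _
    rw [← lintegral_add_left hms]
    have hsub : Set.Icc (s - h) s ⊆ Set.Icc 0 T :=
      Set.Icc_subset_Icc (by linarith [hsm.1]) hsm.2
    refine lintegral_mono_ae ?_
    filter_upwards [ae_restrict_of_ae_restrict_of_subset hsub hiu,
      ae_restrict_of_ae_restrict_of_subset hsub hDc, ae_restrict_mem measurableSet_Icc]
      with r hrX hrD hrm
    have hb1 := hrD (u s) (u r)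
    rw [hsX, hrX] at hb1
    have hX1 : ‖X s - X r‖ ≤ e / (Ib + 1) := by
      rw [← dist_eq_norm]
      refine (hXuc s ⟨hh.le.trans hsm.1, hsm.2⟩ r (hsub hrm) ?_).le
      rw [Real.dist_eq, abs_lt]
      constructor <;> linarith [hrm.1, hrm.2]
    have hb2 := mul_le_mul_of_nonneg_left hX1 (hb0 r)
    have hb3 : |D r (u s) - D r (u r)| ≤ c * ‖u s - u r‖ ^ α
        + (e / (IΦ + 1) * Φ r + e / (Ib + 1) * b r) := by
      linarith [mul_comm (b r) (e / (Ib + 1))]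
    refine (ENNReal.ofReal_le_ofReal hb3).trans (le_of_eq ?_)
    have hΦr := hΦ0 r
    have hbr := hb0 r
    rw [ENNReal.ofReal_add (by positivity) (by positivity), ENNReal.ofReal_mul hc0,
      ENNReal.ofReal_add (by positivity) (by positivity), ENNReal.ofReal_mul (by positivity),
      ENNReal.ofReal_mul (by positivity)]
  have htotal : ∫⁻ s in Set.Icc h T, ENNReal.ofReal (P s - P (s - h))
      ≤ ENNReal.ofReal (6 * e * h) := by
    refine (lintegral_mono_ae hinner).trans ?_
    rw [lintegral_const_mul' _ _ ENNReal.ofNat_ne_top]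
    have hSind : MeasurableSet {q : ℝ × ℝ | q.1 - h ≤ q.2 ∧ q.2 ≤ q.1} :=
      (measurableSet_le (measurable_fst.sub_const h) measurable_snd).inter
        (measurableSet_le measurable_snd measurable_fst)
    have hmeas1 : Measurable fun s => ∫⁻ r in Set.Icc (s - h) s,
        ENNReal.ofReal c * ENNReal.ofReal (‖u s - u r‖ ^ α) := by
      have : ∀ s, ∫⁻ r in Set.Icc (s - h) s, ENNReal.ofReal c * ENNReal.ofReal (‖u s - u r‖ ^ α)
          = ∫⁻ r, {q : ℝ × ℝ | q.1 - h ≤ q.2 ∧ q.2 ≤ q.1}.indicator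
            (fun q => ENNReal.ofReal c * ENNReal.ofReal (‖u q.1 - u q.2‖ ^ α)) (s, r) :=
        fun s => (lintegral_indicator measurableSet_Icc _).symm
      simp only [this]
      exact ((hmeasW.const_mul _).indicator hSind).lintegral_prod_right'
    rw [lintegral_add_left hmeas1]
    have hw1 : ∫⁻ s in Set.Icc h T, ∫⁻ r in Set.Icc (s - h) s,
        ENNReal.ofReal c * ENNReal.ofReal (‖u s - u r‖ ^ α) ≤ ENNReal.ofReal (e * h) := by
      simp only [lintegral_const_mul' _ _ ENNReal.ofReal_ne_top]
      refine (mul_le_mul_right (hwin h hh hh1) _).trans ?_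
      rw [← ENNReal.ofReal_mul hc0]
      refine ENNReal.ofReal_le_ofReal ?_
      have : c * (e / (c + 1) * h) = (c / (c + 1)) * (e * h) := by ring
      rw [this]
      refine mul_le_of_le_one_left (by positivity) ?_
      rw [div_le_one (by positivity)]
      linarith
    have hw2 : ∫⁻ s in Set.Icc h T, ∫⁻ r in Set.Icc (s - h) s,
        (ENNReal.ofReal (e / (IΦ + 1)) * ENNReal.ofReal (Φ r)
          + ENNReal.ofReal (e / (Ib + 1)) * ENNReal.ofReal (b r)) ≤ ENNReal.ofReal (2 * e * h) := by
      have hΦm := hΦ.aestronglyMeasurable.aemeasurable.ennreal_ofReal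
      have hbm := hb.aestronglyMeasurable.aemeasurable.ennreal_ofReal
      refine (lintegral_lintegral_window_snd_le ((hΦm.const_mul _).add (hbm.const_mul _))).trans ?_
      simp only [Pi.add_apply]
      rw [lintegral_add_left' (hΦm.const_mul _), lintegral_const_mul' _ _ ENNReal.ofReal_ne_top,
        lintegral_const_mul' _ _ ENNReal.ofReal_ne_top,
        ← ofReal_integral_eq_lintegral_ofReal hΦ (Eventually.of_forall hΦ0),
        ← ofReal_integral_eq_lintegral_ofReal hb (Eventually.of_forall hb0),
        ← ENNReal.ofReal_mul (by positivity), ← ENNReal.ofReal_mul (by positivity),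
        ← ENNReal.ofReal_add (by positivity) (by positivity), ← ENNReal.ofReal_mul hh.le]
      refine ENNReal.ofReal_le_ofReal ?_
      have k1 : e / (IΦ + 1) * IΦ ≤ e := by
        rw [div_mul_eq_mul_div, div_le_iff₀ (by positivity)]
        nlinarith
      have k2 : e / (Ib + 1) * Ib ≤ e := by
        rw [div_mul_eq_mul_div, div_le_iff₀ (by positivity)]
        nlinarith
      nlinarith
    calc _ ≤ 2 * (ENNReal.ofReal (e * h) + ENNReal.ofReal (2 * e * h)) := by gcongr
      _ = ENNReal.ofReal (6 * e * h) := by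
        rw [← ENNReal.ofReal_add (by positivity) (by positivity),
          ← ENNReal.ofReal_ofNat, ← ENNReal.ofReal_mul (by norm_num)]
        congr 1
        ring
  have mem0 : (0 : ℝ) ∈ Set.Icc 0 T := ⟨le_rfl, hT.le⟩
  have memh : h ∈ Set.Icc 0 T := ⟨hh.le, by linarith [ht.2]⟩
  have memth : t - h ∈ Set.Icc 0 T := ⟨by linarith, by linarith [ht.2]⟩
  have hshift : IntervalIntegrable (fun s => P (s - h)) volume h t := by
    have := (hPI 0 mem0 (t - h) memth).comp_sub_right h
    simpa using this
  have hdom : ∫ s in h..t, (P s - P (s - h)) ≤ 6 * e * h := by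
    rw [intervalIntegral.integral_of_le hht.le, ← integral_Icc_eq_integral_Ioc]
    refine integral_le_of_lintegral_ofReal_le ?_ (by positivity) ?_
    · exact (intervalIntegrable_iff_integrableOn_Icc_of_le hht.le).1
        ((hPI h memh t ht).sub hshift)
    · exact (lintegral_mono_set (Set.Icc_subset_Icc le_rfl ht.2)).trans htotal
  have htel : ∫ s in h..t, (P s - P (s - h))
      = (∫ s in (t - h)..t, P s) - ∫ s in (0 : ℝ)..h, P s := by
    rw [intervalIntegral.integral_sub (hPI h memh t ht) hshift,
      intervalIntegral.integral_comp_sub_right (fun s => P s) h, sub_self]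
    have a1 := intervalIntegral.integral_add_adjacent_intervals (hPI 0 mem0 h memh)
      (hPI h memh t ht)
    have a2 := intervalIntegral.integral_add_adjacent_intervals (hPI 0 mem0 (t - h) memth)
      (hPI (t - h) memth t ht)
    linarith
  have hlow : h * (P t - e) ≤ ∫ s in (t - h)..t, P s := by
    have := intervalIntegral.integral_mono_on (f := fun _ => P t - e) (g := P)
      (by linarith : t - h ≤ t) intervalIntegrable_const (hPI (t - h) memth t ht) (fun s hs => by
        have hd := hPuc t ht s ⟨memth.1.trans hs.1, hs.2.trans ht.2⟩
          (by rw [Real.dist_eq, abs_lt]; constructor <;> linarith [hs.1, hs.2])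
        rw [Real.dist_eq, abs_lt] at hd
        linarith [hd.2])
    simp only [intervalIntegral.integral_const, smul_eq_mul, sub_sub_cancel] at this
    exact this
  have hup : ∫ s in (0 : ℝ)..h, P s ≤ h * (P 0 + e) := by
    have := intervalIntegral.integral_mono_on (g := fun _ => P 0 + e) (f := P)
      hh.le (hPI 0 mem0 h memh) intervalIntegrable_const (fun s hs => by
        have hd := hPuc 0 mem0 s ⟨hs.1, hs.2.trans memh.2⟩
          (by rw [Real.dist_eq, abs_lt]; constructor <;> linarith [hs.1, hs.2])
        rw [Real.dist_eq, abs_lt] at hd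
        linarith [hd.1])
    simp only [intervalIntegral.integral_const, smul_eq_mul, sub_zero] at this
    exact this
  have hfin : h * (P t) ≤ h * (P 0 + ε) := by
    have : ε = 8 * e := by rw [he]; ring
    rw [this]
    linarith
  exact le_of_mul_le_mul_left hfin hh

end

section
variable {𝕏 : Type*} [MeasurableSpace 𝕏] {ν : Measure 𝕏} [SigmaFinite ν] {T : ℝ}

theorem setIntegral_Icc_prod_univ {F : ℝ × 𝕏 → ℝ}
    (hF : Integrable F ((volume.restrict (Set.Icc 0 T)).prod ν)) {t : ℝ} (ht : t ∈ Set.Icc 0 T) :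
    ∫ q in Set.Icc 0 t ×ˢ Set.univ, F q ∂((volume.restrict (Set.Icc 0 T)).prod ν)
      = ∫ s in (0 : ℝ)..t, ∫ z, F (s, z) ∂ν := by
  rw [setIntegral_prod _ hF.integrableOn, Measure.restrict_univ,
    Measure.restrict_restrict measurableSet_Icc,
    Set.inter_eq_left.2 (Set.Icc_subset_Icc le_rfl ht.2),
    intervalIntegral.integral_of_le ht.1, integral_Icc_eq_integral_Ioc]

theorem intervalIntegrable_integral_prod (hT : 0 ≤ T) {F : ℝ × 𝕏 → ℝ}
    (hF : Integrable F ((volume.restrict (Set.Icc 0 T)).prod ν)) :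
    IntervalIntegrable (fun s => ∫ z, F (s, z) ∂ν) volume 0 T :=
  (intervalIntegrable_iff_integrableOn_Icc_of_le hT).2 hF.integral_prod_left

/-- Weak convergence of the densities is uniform over time windows. -/
theorem eventually_abs_integral_sub_le (hT : 0 < T) {gn : ℕ → ℝ × 𝕏 → ℝ} {g : ℝ × 𝕏 → ℝ}
    (hgn0 : ∀ n q, 0 ≤ gn n q)
    {B : Set (ℝ × 𝕏)} (hB : MeasurableSet B)
    (hgnB : ∀ n, IntegrableOn (gn n) B ((volume.restrict (Set.Icc 0 T)).prod ν))
    (hgB : IntegrableOn g B ((volume.restrict (Set.Icc 0 T)).prod ν))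
    (hset : ∀ B' ⊆ B, MeasurableSet B' →
      Tendsto (fun n => ∫ q in B', gn n q ∂((volume.restrict (Set.Icc 0 T)).prod ν)) atTop
        (nhds (∫ q in B', g q ∂((volume.restrict (Set.Icc 0 T)).prod ν)))) {ε : ℝ} (hε : 0 < ε) :
    ∀ᶠ n in atTop, ∀ t ∈ Set.Icc 0 T,
      |(∫ s in (0 : ℝ)..t, ∫ z, B.indicator (gn n) (s, z) ∂ν)
        - ∫ s in (0 : ℝ)..t, ∫ z, B.indicator g (s, z) ∂ν| ≤ ε := by
  have hgnI := fun n => (integrable_indicator_iff hB).2 (hgnB n)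
  have hgI := (integrable_indicator_iff hB).2 hgB
  refine eventually_abs_sub_le_of_monotoneOn hT
    (M := fun n t => ∫ s in (0 : ℝ)..t, ∫ z, B.indicator (gn n) (s, z) ∂ν)
    (m := fun t => ∫ s in (0 : ℝ)..t, ∫ z, B.indicator g (s, z) ∂ν) ?_ ?_ ?_ hε
  · intro n a ha b hb hab
    refine intervalIntegral.integral_mono_interval le_rfl ha.1 hab ?_ ?_
    · exact Eventually.of_forall fun s => integral_nonneg fun z =>
        Set.indicator_nonneg (fun q _ => hgn0 n q) _
    · refine (intervalIntegrable_integral_prod hT.le (hgnI n)).mono_set ?_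
      rw [Set.uIcc_of_le hT.le]
      exact Set.uIcc_subset_Icc ⟨le_rfl, hT.le⟩ hb
  · have := ((intervalIntegrable_integral_prod hT.le hgI).absolutelyContinuousOnInterval_intervalIntegral
      (c := 0) (by simp)).continuousOn
    rwa [Set.uIcc_of_le hT.le] at this
  · intro t ht
    have hm : MeasurableSet ((Set.Icc 0 t ×ˢ Set.univ : Set (ℝ × 𝕏)) ∩ B) :=
      (measurableSet_Icc.prod MeasurableSet.univ).inter hB
    have := hset _ Set.inter_subset_right hm
    simp only [← setIntegral_indicator hB] at this
    simpa only [setIntegral_Icc_prod_univ (hgnI _) ht, setIntegral_Icc_prod_univ hgI ht] using this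

variable {H : Type*} [NormedAddCommGroup H] [InnerProductSpace ℝ H]
  [SecondCountableTopology H] [MeasurableSpace H] [BorelSpace H]

theorem integrable_inner_mul_sub {g₁ g₂ : ℝ × 𝕏 → ℝ} (hg₁ : Measurable g₁)
    (hg₂ : Measurable g₂) {φ : ℝ × 𝕏 → H} (hφ : Measurable φ) {W : ℝ → H} (hW : Measurable W)
    {M S : ℝ} (hM0 : 0 ≤ M) (hM : ∀ᵐ s ∂(volume.restrict (Set.Icc 0 T)), ‖W s‖ ≤ M)
    (h₁ : Integrable (fun q => ‖φ q‖ * |g₁ q - 1|) ((volume.restrict (Set.Icc 0 T)).prod ν))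
    (h₂ : Integrable (fun q => ‖φ q‖ * |g₂ q - 1|) ((volume.restrict (Set.Icc 0 T)).prod ν))
    (hS₁ : ∫ q, ‖φ q‖ * |g₁ q - 1| ∂((volume.restrict (Set.Icc 0 T)).prod ν) ≤ S)
    (hS₂ : ∫ q, ‖φ q‖ * |g₂ q - 1| ∂((volume.restrict (Set.Icc 0 T)).prod ν) ≤ S) :
    Integrable (fun q => ⟪φ q, W q.1⟫ * (g₁ q - g₂ q)) ((volume.restrict (Set.Icc 0 T)).prod ν) ∧
      ∀ t ∈ Set.Icc 0 T,
        |∫ s in (0 : ℝ)..t, ∫ z, ⟪φ (s, z), W s⟫ * (g₁ (s, z) - g₂ (s, z)) ∂ν| ≤ 2 * M * S := by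
  set μ := (volume.restrict (Set.Icc 0 T)).prod ν with hμ
  have hbd : ∀ᵐ q ∂μ, ‖⟪φ q, W q.1⟫ * (g₁ q - g₂ q)‖
      ≤ M * (‖φ q‖ * |g₁ q - 1| + ‖φ q‖ * |g₂ q - 1|) := by
    filter_upwards [Measure.quasiMeasurePreserving_fst.ae hM] with q hq
    rw [norm_mul, Real.norm_eq_abs, Real.norm_eq_abs]
    have e1 : |⟪φ q, W q.1⟫| ≤ ‖φ q‖ * M :=
      (abs_real_inner_le_norm _ _).trans (mul_le_mul_of_nonneg_left hq (norm_nonneg _))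
    have e2 : |g₁ q - g₂ q| ≤ |g₁ q - 1| + |g₂ q - 1| := by
      have := abs_sub_le (g₁ q) 1 (g₂ q)
      rwa [abs_sub_comm 1 (g₂ q)] at this
    calc |⟪φ q, W q.1⟫| * |g₁ q - g₂ q| ≤ (‖φ q‖ * M) * (|g₁ q - 1| + |g₂ q - 1|) := by gcongr
      _ = _ := by ring
  have hdom := (h₁.add h₂).const_mul M
  have hI : Integrable (fun q => ⟪φ q, W q.1⟫ * (g₁ q - g₂ q)) μ := by
    refine hdom.mono' ?_ hbd
    exact ((hφ.inner (hW.comp measurable_fst)).mul (hg₁.sub hg₂)).aestronglyMeasurable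
  refine ⟨hI, fun t ht => ?_⟩
  rw [← setIntegral_Icc_prod_univ hI ht, ← Real.norm_eq_abs]
  refine (norm_integral_le_integral_norm _).trans ?_
  refine (setIntegral_le_integral hI.norm (Eventually.of_forall fun q => norm_nonneg _)).trans ?_
  refine (integral_mono_ae hI.norm hdom hbd).trans ?_
  simp only [Pi.add_apply]
  rw [integral_const_mul, integral_add h₁ h₂]
  nlinarith

end

theorem intervalIntegral_congr_ae_Icc {T t : ℝ} (ht : t ∈ Set.Icc 0 T) {F G : ℝ → ℝ}
    (h : ∀ᵐ s ∂(volume.restrict (Set.Icc 0 T)), F s = G s) :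
    ∫ s in (0 : ℝ)..t, F s = ∫ s in (0 : ℝ)..t, G s := by
  refine intervalIntegral.integral_congr_ae_restrict ?_
  rw [Set.uIoc_of_le ht.1]
  exact ae_restrict_of_ae_restrict_of_subset
    (Set.Ioc_subset_Icc_self.trans (Set.Icc_subset_Icc le_rfl ht.2)) h

section
variable {𝕏 : Type*} [MeasurableSpace 𝕏] {ν : Measure 𝕏} [SigmaFinite ν] {T : ℝ}
  {H : Type*} [NormedAddCommGroup H] [InnerProductSpace ℝ H]

theorem eventually_abs_integral_indicator_inner_le (hT : 0 < T) {gn : ℕ → ℝ × 𝕏 → ℝ}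
    {g : ℝ × 𝕏 → ℝ} (hgn0 : ∀ n q, 0 ≤ gn n q)
    {B : Set (ℝ × 𝕏)} (hB : MeasurableSet B)
    (hgnB : ∀ n, IntegrableOn (gn n) B ((volume.restrict (Set.Icc 0 T)).prod ν))
    (hgB : IntegrableOn g B ((volume.restrict (Set.Icc 0 T)).prod ν))
    (hset : ∀ B' ⊆ B, MeasurableSet B' →
      Tendsto (fun n => ∫ q in B', gn n q ∂((volume.restrict (Set.Icc 0 T)).prod ν)) atTop
        (nhds (∫ q in B', g q ∂((volume.restrict (Set.Icc 0 T)).prod ν))))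
    {b : H} {W : ℕ → ℝ → H} {c : ℝ}
    (hW : ∀ n, ∃ a' : ℝ → ℝ, IntervalIntegrable a' volume 0 T ∧ ∫ r in (0 : ℝ)..T, |a' r| ≤ c ∧
      ∀ᵐ s ∂(volume.restrict (Set.Icc 0 T)), ⟪b, W n s⟫ = ∫ r in (0 : ℝ)..s, a' r)
    {ε : ℝ} (hε : 0 < ε) :
    ∀ᶠ n in atTop, ∀ t ∈ Set.Icc 0 T, |∫ s in (0 : ℝ)..t, ∫ z,
      ⟪B.indicator (fun _ => b) (s, z), W n s⟫ * (gn n (s, z) - g (s, z)) ∂ν| ≤ ε := by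
  have hgnI := fun n => (integrable_indicator_iff hB).2 (hgnB n)
  have hgI := (integrable_indicator_iff hB).2 hgB
  have hd : 0 < ε / (2 * (|c| + 1)) := by positivity
  filter_upwards [eventually_abs_integral_sub_le hT hgn0 hB hgnB hgB hset hd] with n hn t ht
  obtain ⟨a', ha', hc, hWa⟩ := hW n
  have i1 := intervalIntegrable_integral_prod hT.le (hgnI n)
  have i2 := intervalIntegrable_integral_prod hT.le hgI
  have hcongr := intervalIntegral_congr_ae_Icc (F := fun s => ∫ z,
      ⟪B.indicator (fun _ => b) (s, z), W n s⟫ * (gn n (s, z) - g (s, z)) ∂ν)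
      (G := fun s => (∫ r in (0 : ℝ)..s, a' r) * ((∫ z, B.indicator (gn n) (s, z) ∂ν)
        - ∫ z, B.indicator g (s, z) ∂ν)) ht (by
    filter_upwards [hWa, (hgnI n).prod_right_ae, hgI.prod_right_ae] with s hs h1 h2
    rw [← hs, ← integral_sub h1 h2, ← integral_const_mul]
    refine integral_congr_ae (Eventually.of_forall fun z => ?_)
    by_cases hz : (s, z) ∈ B
    · simp [hz]
    · simp [hz])
  rw [hcongr]
  refine (abs_integral_primitive_mul_le ht ha' (i1.sub i2) (d := ε / (2 * (|c| + 1))) ?_ hc).trans ?_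
  · intro s hs
    have sub : Set.uIcc 0 s ⊆ Set.uIcc 0 T := by
      rw [Set.uIcc_of_le hs.1, Set.uIcc_of_le hT.le]
      exact Set.Icc_subset_Icc le_rfl hs.2
    rw [intervalIntegral.integral_sub (i1.mono_set sub) (i2.mono_set sub)]
    exact hn s hs
  · rw [mul_div_assoc', div_le_iff₀ (by positivity)]
    nlinarith [le_abs_self c]

variable [SecondCountableTopology H] [MeasurableSpace H] [BorelSpace H]

theorem eventually_abs_integral_simpleFunc_inner_le (hT : 0 < T) {gn : ℕ → ℝ × 𝕏 → ℝ}
    {g : ℝ × 𝕏 → ℝ} (hgnm : ∀ n, Measurable (gn n)) (hgm : Measurable g)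
    (hgn0 : ∀ n q, 0 ≤ gn n q) {φ : SimpleFunc (ℝ × 𝕏) H}
    (hgnB : ∀ n, ∀ b ≠ (0 : H),
      IntegrableOn (gn n) (φ ⁻¹' {b}) ((volume.restrict (Set.Icc 0 T)).prod ν))
    (hgB : ∀ b ≠ (0 : H), IntegrableOn g (φ ⁻¹' {b}) ((volume.restrict (Set.Icc 0 T)).prod ν))
    (hset : ∀ b ≠ (0 : H), ∀ B' ⊆ φ ⁻¹' {b}, MeasurableSet B' →
      Tendsto (fun n => ∫ q in B', gn n q ∂((volume.restrict (Set.Icc 0 T)).prod ν)) atTop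
        (nhds (∫ q in B', g q ∂((volume.restrict (Set.Icc 0 T)).prod ν))))
    {W : ℕ → ℝ → H} (hWm : ∀ n, Measurable (W n)) {M : ℝ}
    (hM : ∀ n, ∀ᵐ s ∂(volume.restrict (Set.Icc 0 T)), ‖W n s‖ ≤ M)
    (hW : ∀ b ∈ φ.range, ∃ c : ℝ, ∀ n, ∃ a' : ℝ → ℝ, IntervalIntegrable a' volume 0 T ∧
      ∫ r in (0 : ℝ)..T, |a' r| ≤ c ∧
      ∀ᵐ s ∂(volume.restrict (Set.Icc 0 T)), ⟪b, W n s⟫ = ∫ r in (0 : ℝ)..s, a' r)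
    {ε : ℝ} (hε : 0 < ε) :
    ∀ᶠ n in atTop, ∀ t ∈ Set.Icc 0 T, |∫ s in (0 : ℝ)..t, ∫ z,
      ⟪φ (s, z), W n s⟫ * (gn n (s, z) - g (s, z)) ∂ν| ≤ ε := by
  classical
  set S : Finset H := φ.range.filter (· ≠ 0) with hS
  have hε' : 0 < ε / (S.card + 1) := by positivity
  have hall : ∀ᶠ n in atTop, ∀ b ∈ S, ∀ t ∈ Set.Icc 0 T, |∫ s in (0 : ℝ)..t, ∫ z,
      ⟪(φ ⁻¹' {b}).indicator (fun _ => b) (s, z), W n s⟫ * (gn n (s, z) - g (s, z)) ∂ν|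
        ≤ ε / (S.card + 1) := by
    rw [Finset.eventually_all]
    intro b hb
    rw [hS, Finset.mem_filter] at hb
    obtain ⟨c, hc⟩ := hW b hb.1
    exact eventually_abs_integral_indicator_inner_le hT hgn0 (φ.measurableSet_preimage {b})
      (fun n => hgnB n b hb.2) (hgB b hb.2) (hset b hb.2) hc hε'
  filter_upwards [hall] with n hn t ht
  set Fb : H → ℝ × 𝕏 → ℝ := fun b q =>
    ⟪(φ ⁻¹' {b}).indicator (fun _ => b) q, W n q.1⟫ * (gn n q - g q) with hFb
  have hFI : ∀ b ∈ S, Integrable (Fb b) ((volume.restrict (Set.Icc 0 T)).prod ν) := by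
    intro b hb
    rw [hS, Finset.mem_filter] at hb
    have hBm := φ.measurableSet_preimage {b}
    have hI : Integrable ((φ ⁻¹' {b}).indicator fun q => gn n q - g q)
        ((volume.restrict (Set.Icc 0 T)).prod ν) :=
      (integrable_indicator_iff hBm).2 ((hgnB n b hb.2).sub (hgB b hb.2))
    refine (hI.norm.const_mul (‖b‖ * M)).mono' ?_ ?_
    · exact (((measurable_const.indicator hBm).inner ((hWm n).comp measurable_fst)).mul
        ((hgnm n).sub hgm)).aestronglyMeasurable
    · filter_upwards [Measure.quasiMeasurePreserving_fst.ae (hM n)] with q hq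
      by_cases hqb : q ∈ φ ⁻¹' {b}
      · simp only [hFb, Set.indicator_of_mem hqb, norm_mul]
        gcongr
        exact (norm_inner_le_norm _ _).trans (mul_le_mul_of_nonneg_left hq (norm_nonneg _))
      · simp [hFb, Set.indicator_of_notMem hqb]
  have hsum : ∀ q, ⟪φ q, W n q.1⟫ * (gn n q - g q) = ∑ b ∈ S, Fb b q := by
    intro q
    by_cases h0 : φ q = 0
    · rw [h0, inner_zero_left, zero_mul]
      refine (Finset.sum_eq_zero fun b hb => ?_).symm
      rw [hS, Finset.mem_filter] at hb
      have : q ∉ φ ⁻¹' {b} := fun h => hb.2 (by rw [← h0]; exact h.symm)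
      simp [hFb, Set.indicator_of_notMem this]
    · rw [Finset.sum_eq_single (φ q)]
      · simp [hFb]
      · intro b _ hb
        have : q ∉ φ ⁻¹' {b} := fun h => hb h.symm
        simp [hFb, Set.indicator_of_notMem this]
      · intro h
        exact absurd (Finset.mem_filter.2 ⟨φ.mem_range_self q, h0⟩) h
  have hsumI : Integrable (fun q => ∑ b ∈ S, Fb b q) ((volume.restrict (Set.Icc 0 T)).prod ν) :=
    integrable_finsetSum _ hFI
  have heq : ∫ s in (0 : ℝ)..t, ∫ z, ⟪φ (s, z), W n s⟫ * (gn n (s, z) - g (s, z)) ∂ν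
      = ∑ b ∈ S, ∫ s in (0 : ℝ)..t, ∫ z, Fb b (s, z) ∂ν := by
    have h1 : ∀ s z, ⟪φ (s, z), W n s⟫ * (gn n (s, z) - g (s, z)) = ∑ b ∈ S, Fb b (s, z) :=
      fun s z => hsum (s, z)
    simp only [h1]
    rw [← setIntegral_Icc_prod_univ hsumI ht,
      integral_finsetSum _ fun b hb => (hFI b hb).integrableOn]
    exact Finset.sum_congr rfl fun b hb => setIntegral_Icc_prod_univ (hFI b hb) ht
  rw [heq]
  refine (Finset.abs_sum_le_sum_abs _ _).trans ((Finset.sum_le_sum fun b hb => hn b hb t ht).trans ?_)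
  rw [Finset.sum_const, nsmul_eq_mul, mul_div_assoc', div_le_iff₀ (by positivity)]
  nlinarith

end

section
variable {𝕏 : Type*} [MeasurableSpace 𝕏] {ν : Measure 𝕏} [SigmaFinite ν] {T : ℝ}
  {H : Type*} [NormedAddCommGroup H] [InnerProductSpace ℝ H]
  [SecondCountableTopology H] [MeasurableSpace H] [BorelSpace H]

/-- If the densities `gn` with bounded entropy converge to `g` on sets of finite measure, then the
integrals of an exponentially integrable field against paths which are weakly of bounded variation,
uniformly in `n`, tend to zero uniformly in time. -/
theorem eventually_abs_integral_inner_le (hT : 0 < T) {gn : ℕ → ℝ × 𝕏 → ℝ} {g : ℝ × 𝕏 → ℝ} {N : ℕ}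
    (hgn : ∀ n, Measurable (gn n) ∧ (∀ q, 0 ≤ gn n q) ∧
      (∫⁻ q, ENNReal.ofReal (gn n q * Real.log (gn n q) - gn n q + 1)
        ∂((volume.restrict (Set.Icc 0 T)).prod ν)) ≤ (N : ℝ≥0∞))
    (hg : Measurable g ∧ (∀ q, 0 ≤ g q) ∧
      (∫⁻ q, ENNReal.ofReal (g q * Real.log (g q) - g q + 1)
        ∂((volume.restrict (Set.Icc 0 T)).prod ν)) ≤ (N : ℝ≥0∞))
    (hset : ∀ B, MeasurableSet B → (volume.restrict (Set.Icc 0 T)).prod ν B < ⊤ →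
      Tendsto (fun n => ∫ q in B, gn n q ∂((volume.restrict (Set.Icc 0 T)).prod ν)) atTop
        (nhds (∫ q in B, g q ∂((volume.restrict (Set.Icc 0 T)).prod ν))))
    {φ : ℝ × 𝕏 → H} (hφ : Measurable φ) {h : ℝ × 𝕏 → ℝ}
    (hI : ∀ σ : ℝ, 0 ≤ σ → Integrable (fun q => h q ^ 2 * Real.exp (σ * h q))
      ((volume.restrict (Set.Icc 0 T)).prod ν))
    (hφh : ∀ᵐ q ∂((volume.restrict (Set.Icc 0 T)).prod ν), ‖φ q‖ ≤ h q)
    {W : ℕ → ℝ → H} (hWm : ∀ n, Measurable (W n)) {M : ℝ} (hM0 : 0 ≤ M)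
    (hM : ∀ n, ∀ᵐ s ∂(volume.restrict (Set.Icc 0 T)), ‖W n s‖ ≤ M)
    {D : Set H} (hD : Dense D) (hD0 : (0 : H) ∈ D)
    (hW : ∀ b ∈ D, ∃ c : ℝ, ∀ n, ∃ a' : ℝ → ℝ, IntervalIntegrable a' volume 0 T ∧
      ∫ r in (0 : ℝ)..T, |a' r| ≤ c ∧
      ∀ᵐ s ∂(volume.restrict (Set.Icc 0 T)), ⟪b, W n s⟫ = ∫ r in (0 : ℝ)..s, a' r)
    {ε : ℝ} (hε : 0 < ε) :
    ∀ᶠ n in atTop, ∀ t ∈ Set.Icc 0 T, |∫ s in (0 : ℝ)..t, ∫ z,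
      ⟪φ (s, z), W n s⟫ * (gn n (s, z) - g (s, z)) ∂ν| ≤ ε := by
  set μ := (volume.restrict (Set.Icc 0 T)).prod ν with hμ
  set σ : ℝ := 8 * M * N / ε + 1 with hσdef
  have hσ : 0 < σ := by positivity
  set ψ : ℕ → SimpleFunc (ℝ × 𝕏) H := SimpleFunc.approxOn φ hφ D 0 hD0 with hψ
  have hψ1 : ∀ k q, ‖φ q - ψ k q‖ ≤ ‖φ q‖ := by
    intro k q
    have := SimpleFunc.edist_approxOn_le hφ hD0 q k
    rwa [edist_comm, edist_comm 0, edist_eq_enorm_sub, edist_zero_right,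
      enorm_le_iff_norm_le] at this
  have hψlim : ∀ q, Tendsto (fun k => ψ k q) atTop (nhds (φ q)) := fun q =>
    SimpleFunc.tendsto_approxOn hφ hD0 (hD _)
  have hmono : ∀ {τ a c : ℝ}, 0 ≤ τ → 0 ≤ a → a ≤ c →
      a ^ 2 * Real.exp (τ * a) ≤ c ^ 2 * Real.exp (τ * c) := by
    intro τ a c hτ ha hac
    gcongr
  have hdm : ∀ k, Measurable fun q => φ q - ψ k q := fun k => hφ.sub (ψ k).measurable
  have hdI : ∀ k, Integrable (fun q => ‖φ q - ψ k q‖ ^ 2 * Real.exp (σ * ‖φ q - ψ k q‖)) μ := by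
    intro k
    have hm := (hdm k).norm
    refine (hI σ hσ.le).mono' (by fun_prop) ?_
    filter_upwards [hφh] with q hq
    rw [Real.norm_of_nonneg (by positivity)]
    exact hmono hσ.le (norm_nonneg _) ((hψ1 k q).trans hq)
  have hφI : Integrable (fun q => ‖φ q‖ ^ 2 * Real.exp (σ * ‖φ q‖)) μ := by
    have hm := hφ.norm
    refine (hI σ hσ.le).mono' (by fun_prop) ?_
    filter_upwards [hφh] with q hq
    rw [Real.norm_of_nonneg (by positivity)]
    exact hmono hσ.le (norm_nonneg _) hq
  have hlim : Tendsto (fun k => ∫ q, ‖φ q - ψ k q‖ ^ 2 * Real.exp (σ * ‖φ q - ψ k q‖) ∂μ)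
      atTop (nhds 0) := by
    rw [← integral_zero (ℝ × 𝕏) ℝ (μ := μ)]
    refine tendsto_integral_of_dominated_convergence _ (fun k => (hdI k).aestronglyMeasurable)
      (hI σ hσ.le) (fun k => ?_) (Eventually.of_forall fun q => ?_)
    · filter_upwards [hφh] with q hq
      rw [Real.norm_of_nonneg (by positivity)]
      exact hmono hσ.le (norm_nonneg _) ((hψ1 k q).trans hq)
    · have h1 : Tendsto (fun k => ‖φ q - ψ k q‖) atTop (nhds 0) := by
        have := (tendsto_const_nhds (x := φ q)).sub (hψlim q)
        rw [sub_self] at this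
        exact tendsto_zero_iff_norm_tendsto_zero.1 this
      have h2 := (h1.pow 2).mul ((Real.continuous_exp.tendsto _).comp (h1.const_mul σ))
      simpa using h2
  obtain ⟨k, hk⟩ := (hlim.eventually_lt_const (u := ε / (8 * (M + 1) * σ)) (by positivity)).exists
  set I : ℝ := ∫ q, ‖φ q - ψ k q‖ ^ 2 * Real.exp (σ * ‖φ q - ψ k q‖) ∂μ with hIdef
  have hfin : ∀ b ≠ (0 : H), μ (ψ k ⁻¹' {b}) < ⊤ := by
    intro b hb
    have hb' : 0 < ‖b‖ := norm_pos_iff.2 hb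
    have h2 : Integrable (fun q => h q ^ 2) μ := by simpa using hI 0 le_rfl
    refine lt_of_le_of_lt (measure_mono_ae ?_)
      (h2.measure_norm_ge_lt_top (ε := (‖b‖ / 2) ^ 2) (by positivity))
    filter_upwards [hφh] with q hq hqb
    have hqb' : ψ k q = b := hqb
    have h3 := hψ1 k q
    have h4 := norm_sub_norm_le (ψ k q) (φ q)
    rw [norm_sub_rev] at h4
    rw [hqb'] at h3 h4
    change (‖b‖ / 2) ^ 2 ≤ ‖h q ^ 2‖
    rw [Real.norm_of_nonneg (by positivity)]
    gcongr
    linarith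
  have hsimple := eventually_abs_integral_simpleFunc_inner_le hT (fun n => (hgn n).1) hg.1
    (fun n => (hgn n).2.1) (φ := ψ k)
    (fun n b hb => integrableOn_of_entropy (hgn n).1 (hgn n).2.1 (hgn n).2.2 (hfin b hb))
    (fun b hb => integrableOn_of_entropy hg.1 hg.2.1 hg.2.2 (hfin b hb))
    (fun b hb B' hB' hBm => hset B' hBm ((measure_mono hB').trans_lt (hfin b hb)))
    hWm hM (fun b hb => by
      obtain ⟨q, rfl⟩ := SimpleFunc.mem_range.1 hb
      exact hW _ (SimpleFunc.approxOn_mem hφ hD0 k q)) (half_pos hε)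
  filter_upwards [hsimple] with n hn t ht
  have a1 := integrable_mul_abs_sub_one (hgn n).1 (hgn n).2.1 (hgn n).2.2 hσ
    hφ.norm.aestronglyMeasurable (fun q => norm_nonneg _) hφI
  have a2 := integrable_mul_abs_sub_one hg.1 hg.2.1 hg.2.2 hσ
    hφ.norm.aestronglyMeasurable (fun q => norm_nonneg _) hφI
  have a3 := integrable_mul_abs_sub_one (hgn n).1 (hgn n).2.1 (hgn n).2.2 hσ
    (hdm k).norm.aestronglyMeasurable (fun q => norm_nonneg _) (hdI k)
  have a4 := integrable_mul_abs_sub_one hg.1 hg.2.1 hg.2.2 hσ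
    (hdm k).norm.aestronglyMeasurable (fun q => norm_nonneg _) (hdI k)
  have b1 := (integrable_inner_mul_sub (hgn n).1 hg.1 hφ (hWm n) hM0 (hM n) a1.1 a2.1 a1.2 a2.2).1
  obtain ⟨b2, b3⟩ := integrable_inner_mul_sub (hgn n).1 hg.1 (hdm k) (hWm n) hM0 (hM n)
    a3.1 a4.1 a3.2 a4.2
  have b4 : Integrable (fun q => ⟪ψ k q, W n q.1⟫ * (gn n q - g q)) μ := by
    refine (b1.sub b2).congr (Eventually.of_forall fun q => ?_)
    simp only [Pi.sub_apply, inner_sub_left]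
    ring
  have hsplit : ∫ s in (0 : ℝ)..t, ∫ z, ⟪φ (s, z), W n s⟫ * (gn n (s, z) - g (s, z)) ∂ν
      = (∫ s in (0 : ℝ)..t, ∫ z, ⟪ψ k (s, z), W n s⟫ * (gn n (s, z) - g (s, z)) ∂ν)
        + ∫ s in (0 : ℝ)..t, ∫ z,
          ⟪φ (s, z) - ψ k (s, z), W n s⟫ * (gn n (s, z) - g (s, z)) ∂ν := by
    have c1 := setIntegral_Icc_prod_univ b1 ht
    have c2 := setIntegral_Icc_prod_univ b2 ht
    have c4 := setIntegral_Icc_prod_univ b4 ht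
    dsimp only at c1 c2 c4
    rw [← c1, ← c2, ← c4, ← integral_add b4.integrableOn b2.integrableOn]
    refine integral_congr_ae (Eventually.of_forall fun q => ?_)
    simp only [inner_sub_left]
    ring
  rw [hsplit]
  refine (abs_add_le _ _).trans ?_
  have hsmall : 2 * M * (N / σ + σ * I) ≤ ε / 2 := by
    have e1 : M * (N / σ) ≤ ε / 8 := by
      rw [mul_div_assoc', div_le_iff₀ hσ, hσdef]
      have : ε / 8 * (8 * M * N / ε + 1) = M * N + ε / 8 := by field_simp
      rw [this]
      linarith
    have e2 : M * (σ * I) ≤ ε / 8 := by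
      have h1 : I * (8 * (M + 1) * σ) ≤ ε := ((lt_div_iff₀ (by positivity)).1 hk).le
      have h2 : 0 ≤ I := integral_nonneg fun q => by positivity
      nlinarith [mul_nonneg h2 hσ.le]
    linarith
  linarith [hn t ht, (b3 t ht).trans hsmall]

end

/-- Young's inequality with an arbitrarily small constant in front of the first term. -/
theorem exists_mul_le_mul_rpow_add {α κ : ℝ} (hα : 1 < α) (hκ : 0 < κ) :
    ∃ c ≥ 0, ∀ a d : ℝ, 0 ≤ a → 0 ≤ d → a * d ≤ κ * a ^ (α / (α - 1)) + c * d ^ α := by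
  have hconj : (α / (α - 1)).HolderConjugate α := (Real.HolderConjugate.conjExponent hα).symm
  set q := α / (α - 1) with hq
  have hq0 : 0 < q := hconj.pos
  refine ⟨(κ ^ (-q⁻¹)) ^ α, by positivity, fun a d ha hd => ?_⟩
  have h := Real.young_inequality_of_nonneg (a := κ ^ q⁻¹ * a) (b := κ ^ (-q⁻¹) * d)
    (by positivity) (by positivity) hconj
  have e1 : κ ^ q⁻¹ * a * (κ ^ (-q⁻¹) * d) = a * d := by
    have : κ ^ q⁻¹ * κ ^ (-q⁻¹) = 1 := by rw [← Real.rpow_add hκ, add_neg_cancel, Real.rpow_zero]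
    linear_combination (a * d) * this
  rw [e1, Real.mul_rpow (by positivity) ha, Real.mul_rpow (by positivity) hd,
    Real.rpow_inv_rpow hκ.le hq0.ne'] at h
  refine h.trans (add_le_add ?_ ?_)
  · exact div_le_self (by positivity) hconj.lt.le
  · exact div_le_self (by positivity) hα.le

section
variable {𝕏 : Type*} [MeasurableSpace 𝕏] {ν : Measure 𝕏}
  {H : Type*} [NormedAddCommGroup H] [InnerProductSpace ℝ H]
  [SecondCountableTopology H] [MeasurableSpace H] [BorelSpace H]

theorem integrable_inner_mul_sub_one {φ : 𝕏 → H} (hφ : Measurable φ) {l g : 𝕏 → ℝ}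
    (hg : Measurable g) (hI : Integrable (fun z => l z * |g z - 1|) ν) {c : ℝ}
    (hb : ∀ z, ‖φ z‖ ≤ l z * c) (y : H) :
    Integrable (fun z => ⟪φ z, y⟫ * (g z - 1)) ν ∧
      |∫ z, ⟪φ z, y⟫ * (g z - 1) ∂ν| ≤ c * (∫ z, l z * |g z - 1| ∂ν) * ‖y‖ := by
  have hbd : ∀ z, ‖⟪φ z, y⟫ * (g z - 1)‖ ≤ c * (l z * |g z - 1|) * ‖y‖ := by
    intro z
    rw [norm_mul, Real.norm_eq_abs (g z - 1)]
    calc ‖⟪φ z, y⟫‖ * |g z - 1| ≤ ((l z * c) * ‖y‖) * |g z - 1| := by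
          gcongr
          exact (norm_inner_le_norm _ _).trans (mul_le_mul_of_nonneg_right (hb z) (norm_nonneg _))
      _ = _ := by ring
  have hI2 := (hI.const_mul c).mul_const ‖y‖
  have hI1 : Integrable (fun z => ⟪φ z, y⟫ * (g z - 1)) ν :=
    hI2.mono' ((hφ.inner measurable_const).mul (hg.sub_const 1)).aestronglyMeasurable
      (Eventually.of_forall hbd)
  refine ⟨hI1, ?_⟩
  rw [← Real.norm_eq_abs]
  refine (norm_integral_le_integral_norm _).trans ((integral_mono hI1.norm hI2 hbd).trans ?_)
  rw [integral_mul_const, integral_const_mul]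

end

/-- The drift of the skeleton equation along the path `u`, tested against `v`. -/
noncomputable def skeletonDrift {𝕏 H V : Type*} [MeasurableSpace 𝕏]
    [NormedAddCommGroup H] [InnerProductSpace ℝ H] [NormedAddCommGroup V] [NormedSpace ℝ V]
    (ν : Measure 𝕏) (i : V →L[ℝ] H) (A : ℝ → V → (V →L[ℝ] ℝ)) (f : ℝ → V → 𝕏 → H)
    (g : ℝ × 𝕏 → ℝ) (u : ℝ → V) (r : ℝ) (v : V) : ℝ :=
  A r (u r) v + ∫ z, ⟪f r (u r) z, i v⟫ * (g (r, z) - 1) ∂ν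

/-- The measurability, growth and coercivity conditions on the coefficients of the skeleton
equation. -/
structure IsSkeletonCoeff {𝕏 H V : Type*} [MeasurableSpace 𝕏]
    [NormedAddCommGroup H] [InnerProductSpace ℝ H] [MeasurableSpace H]
    [NormedAddCommGroup V] [NormedSpace ℝ V] [MeasurableSpace V]
    (T α β θ C : ℝ) (F : ℝ → ℝ) (i : V →L[ℝ] H) (A : ℝ → V → (V →L[ℝ] ℝ))
    (f : ℝ → V → 𝕏 → H) (Lf : ℝ × 𝕏 → ℝ) : Prop where
  hT : 0 < T
  hα : 1 < α
  hβ : 0 ≤ β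
  hθ : 0 < θ
  hC : 0 < C
  hFnn : ∀ t, 0 ≤ F t
  hF : IntegrableOn F (Set.Icc 0 T)
  hAm : ∀ v : V, Measurable fun q : ℝ × V => A q.1 q.2 v
  hfm : Measurable fun q : ℝ × V × 𝕏 => f q.1 q.2.1 q.2.2
  coercive : ∀ t ∈ Set.Icc (0 : ℝ) T, ∀ v : V,
    2 * A t v v + θ * ‖v‖ ^ α ≤ F t * (1 + ‖i v‖ ^ (2 : ℕ))
  growth : ∀ t ∈ Set.Icc (0 : ℝ) T, ∀ v : V,
    ‖A t v‖ ^ (α / (α - 1)) ≤ (F t + C * ‖v‖ ^ α) * (1 + ‖i v‖ ^ β)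
  hLfm : Measurable Lf
  hLfnn : ∀ q, 0 ≤ Lf q
  growth_noise : ∀ t ∈ Set.Icc (0 : ℝ) T, ∀ (v : V) (z : 𝕏), ‖f t v z‖ ≤ Lf (t, z) * (1 + ‖i v‖)

section
variable {𝕏 : Type*} [MeasurableSpace 𝕏] {ν : Measure 𝕏} [SigmaFinite ν]
  {H : Type*} [NormedAddCommGroup H] [InnerProductSpace ℝ H] [MeasurableSpace H]
  {V : Type*} [NormedAddCommGroup V] [NormedSpace ℝ V] [MeasurableSpace V]
  {T α β θ C : ℝ} {F : ℝ → ℝ} {i : V →L[ℝ] H} {A : ℝ → V → (V →L[ℝ] ℝ)}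
  {f : ℝ → V → 𝕏 → H} {Lf : ℝ × 𝕏 → ℝ} {g : ℝ × 𝕏 → ℝ} {u : ℝ → V}

namespace IsSkeletonCoeff

theorem integrableOn_growth (hc : IsSkeletonCoeff T α β θ C F i A f Lf)
    (huα : IntegrableOn (fun r => ‖u r‖ ^ α) (Set.Icc 0 T)) (M : ℝ) :
    IntegrableOn (fun r => (F r + C * ‖u r‖ ^ α) * (1 + M ^ β)) (Set.Icc 0 T) :=
  (hc.hF.add (huα.const_mul C)).mul_const _

variable [SecondCountableTopology H] [BorelSpace H]

theorem ae_integrable_noise (hc : IsSkeletonCoeff T α β θ C F i A f Lf)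
    (hg : Measurable g)
    (hI : Integrable (fun q => Lf q * |g q - 1|) ((volume.restrict (Set.Icc 0 T)).prod ν))
    (u : ℝ → V) :
    ∀ᵐ r ∂(volume.restrict (Set.Icc 0 T)), ∀ y : H,
      Integrable (fun z => ⟪f r (u r) z, y⟫ * (g (r, z) - 1)) ν ∧
      |∫ z, ⟪f r (u r) z, y⟫ * (g (r, z) - 1) ∂ν|
        ≤ (1 + ‖i (u r)‖) * (∫ z, Lf (r, z) * |g (r, z) - 1| ∂ν) * ‖y‖ := by
  filter_upwards [hI.prod_right_ae, ae_restrict_mem measurableSet_Icc] with r hr hrm y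
  exact integrable_inner_mul_sub_one
    (hc.hfm.comp (measurable_const.prodMk (measurable_const.prodMk measurable_id)))
    (hg.comp (measurable_const.prodMk measurable_id)) hr (hc.growth_noise r hrm (u r)) y

theorem abs_drift_sub_le (hc : IsSkeletonCoeff T α β θ C F i A f Lf)
    (hg : Measurable g)
    (hI : Integrable (fun q => Lf q * |g q - 1|) ((volume.restrict (Set.Icc 0 T)).prod ν))
    {M : ℝ} (hM : ∀ᵐ r ∂(volume.restrict (Set.Icc 0 T)), ‖i (u r)‖ ≤ M)
    {κ c : ℝ} (hκ : 0 < κ)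
    (hκc : ∀ a d : ℝ, 0 ≤ a → 0 ≤ d → a * d ≤ κ * a ^ (α / (α - 1)) + c * d ^ α) :
    ∀ᵐ r ∂(volume.restrict (Set.Icc 0 T)), ∀ v w : V,
      |skeletonDrift ν i A f g u r v - skeletonDrift ν i A f g u r w|
        ≤ κ * ((F r + C * ‖u r‖ ^ α) * (1 + M ^ β)) + c * ‖v - w‖ ^ α
          + ((1 + M) * ∫ z, Lf (r, z) * |g (r, z) - 1| ∂ν) * ‖i v - i w‖ := by
  filter_upwards [hc.ae_integrable_noise hg hI u, hM, ae_restrict_mem measurableSet_Icc]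
    with r hr hrM hrm v w
  have e1 : skeletonDrift ν i A f g u r v - skeletonDrift ν i A f g u r w
      = A r (u r) (v - w) + ∫ z, ⟪f r (u r) z, i v - i w⟫ * (g (r, z) - 1) ∂ν := by
    have : ∀ z, ⟪f r (u r) z, i v - i w⟫ * (g (r, z) - 1)
        = ⟪f r (u r) z, i v⟫ * (g (r, z) - 1) - ⟪f r (u r) z, i w⟫ * (g (r, z) - 1) := by
      intro z
      rw [inner_sub_right]
      ring
    simp only [this, skeletonDrift, map_sub]
    rw [integral_sub (hr _).1 (hr _).1]
    ring
  have hFr := hc.hFnn r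
  have hCC := hc.hC
  have hl0 : 0 ≤ ∫ z, Lf (r, z) * |g (r, z) - 1| ∂ν :=
    integral_nonneg fun z => mul_nonneg (hc.hLfnn _) (abs_nonneg _)
  rw [e1]
  refine (abs_add_le _ _).trans (add_le_add ?_ ((hr _).2.trans ?_))
  · have e2 : |A r (u r) (v - w)| ≤ ‖A r (u r)‖ * ‖v - w‖ := (A r (u r)).le_opNorm _
    refine e2.trans ((hκc _ _ (norm_nonneg _) (norm_nonneg _)).trans ?_)
    gcongr
    refine (hc.growth r hrm (u r)).trans ?_
    have := hc.hβ
    gcongr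
  · gcongr

variable [BorelSpace V]

theorem measurable_noise (hc : IsSkeletonCoeff T α β θ C F i A f Lf)
    (hg : Measurable g) (hu : StronglyMeasurable u) :
    Measurable fun q : ℝ × V => ∫ z, ⟪f q.1 (u q.1) z, i q.2⟫ * (g (q.1, z) - 1) ∂ν := by
  have h1 : Measurable fun q : (ℝ × V) × 𝕏 => f q.1.1 (u q.1.1) q.2 :=
    hc.hfm.comp (f := fun q : (ℝ × V) × 𝕏 => (q.1.1, u q.1.1, q.2))
      ((measurable_fst.comp measurable_fst).prodMk
        ((hu.measurable.comp (measurable_fst.comp measurable_fst)).prodMk measurable_snd))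
  have h2 : Measurable fun q : (ℝ × V) × 𝕏 => i q.1.2 :=
    i.continuous.measurable.comp (measurable_snd.comp measurable_fst)
  have h3 : Measurable fun q : (ℝ × V) × 𝕏 => g (q.1.1, q.2) :=
    hg.comp ((measurable_fst.comp measurable_fst).prodMk measurable_snd)
  have h4 : Measurable (Function.uncurry fun (q : ℝ × V) (z : 𝕏) =>
      ⟪f q.1 (u q.1) z, i q.2⟫ * (g (q.1, z) - 1)) := (h1.inner h2).mul (h3.sub_const 1)
  exact (h4.stronglyMeasurable.integral_prod_right (ν := ν)).measurable

theorem intervalIntegrable_drift (hc : IsSkeletonCoeff T α β θ C F i A f Lf)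
    (hg : Measurable g)
    (hI : Integrable (fun q => Lf q * |g q - 1|) ((volume.restrict (Set.Icc 0 T)).prod ν))
    (hu : StronglyMeasurable u) (huα : IntegrableOn (fun r => ‖u r‖ ^ α) (Set.Icc 0 T))
    {M : ℝ} (hM : ∀ᵐ r ∂(volume.restrict (Set.Icc 0 T)), ‖i (u r)‖ ≤ M) (v : V) :
    IntegrableOn (fun r => A r (u r) v) (Set.Icc 0 T) ∧
    IntegrableOn (fun r => ∫ z, ⟪f r (u r) z, i v⟫ * (g (r, z) - 1) ∂ν) (Set.Icc 0 T) := by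
  constructor
  · obtain ⟨c, hc0, hcY⟩ := exists_mul_le_mul_rpow_add hc.hα one_pos
    have hconst : IntegrableOn (fun _ : ℝ => c * ‖v‖ ^ α) (Set.Icc 0 T) :=
      integrableOn_const (by simp [Real.volume_Icc])
    refine ((hc.integrableOn_growth huα M).add hconst).mono'
      ((hc.hAm v).comp (measurable_id.prodMk hu.measurable)).aestronglyMeasurable ?_
    filter_upwards [hM, ae_restrict_mem measurableSet_Icc] with r hrM hrm
    have hFr := hc.hFnn r
    have hCC := hc.hC
    have hβ := hc.hβ
    have e1 := (A r (u r)).le_opNorm v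
    have e2 := hcY _ _ (norm_nonneg (A r (u r))) (norm_nonneg v)
    have e3 := hc.growth r hrm (u r)
    have e4 : (F r + C * ‖u r‖ ^ α) * (1 + ‖i (u r)‖ ^ β)
      ≤ (F r + C * ‖u r‖ ^ α) * (1 + M ^ β) := by gcongr
    simp only [Pi.add_apply]
    linarith
  · refine ((hI.integral_prod_left.const_mul (1 + M)).mul_const ‖i v‖).mono'
      ((hc.measurable_noise hg hu).comp
        (measurable_id.prodMk measurable_const)).aestronglyMeasurable ?_
    filter_upwards [hc.ae_integrable_noise hg hI u, hM] with r hr hrM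
    have hl0 : 0 ≤ ∫ z, Lf (r, z) * |g (r, z) - 1| ∂ν :=
      integral_nonneg fun z => mul_nonneg (hc.hLfnn _) (abs_nonneg _)
    refine ((hr (i v)).2).trans ?_
    gcongr

variable [SecondCountableTopology V]

theorem measurable_drift (hc : IsSkeletonCoeff T α β θ C F i A f Lf)
    (hg : Measurable g) (hu : StronglyMeasurable u) :
    Measurable fun q : ℝ × V => skeletonDrift ν i A f g u q.1 q.2 := by
  have hA : Measurable fun q : ℝ × V => A q.1 (u q.1) q.2 :=
    (measurable_uncurry_of_continuous_of_measurable (u := fun (v : V) (r : ℝ) => A r (u r) v)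
      (fun r => (A r (u r)).continuous)
      (fun v => (hc.hAm v).comp (measurable_id.prodMk hu.measurable))).comp measurable_swap
  exact hA.add (hc.measurable_noise hg hu)

end IsSkeletonCoeff

end

/-- A weak drift whose increments in the test vector are controlled as required by the energy
inequality. -/
structure IsDrift {H V : Type*} [NormedAddCommGroup H] [InnerProductSpace ℝ H]
    [NormedAddCommGroup V] [NormedSpace ℝ V] [MeasurableSpace V]
    (T α : ℝ) (i : V →L[ℝ] H) (D : ℝ → V → ℝ) (Φ b : ℝ → ℝ) : Prop where
  measurable : Measurable fun q : ℝ × V => D q.1 q.2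
  integrable_Φ : IntegrableOn Φ (Set.Icc 0 T)
  Φ_nonneg : ∀ r, 0 ≤ Φ r
  integrable_b : IntegrableOn b (Set.Icc 0 T)
  b_nonneg : ∀ r, 0 ≤ b r
  map_zero : ∀ r, D r 0 = 0
  abs_sub_le : ∀ κ > 0, ∃ c ≥ 0, ∀ᵐ r ∂(volume.restrict (Set.Icc 0 T)), ∀ v w : V,
      |D r v - D r w| ≤ κ * Φ r + c * ‖v - w‖ ^ α + b r * ‖i v - i w‖

theorem IsDrift.sub {H V : Type*} [NormedAddCommGroup H] [InnerProductSpace ℝ H]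
    [NormedAddCommGroup V] [NormedSpace ℝ V] [MeasurableSpace V]
    {T α : ℝ} {i : V →L[ℝ] H} {D₁ D₂ : ℝ → V → ℝ} {Φ₁ Φ₂ b₁ b₂ : ℝ → ℝ}
    (h₁ : IsDrift T α i D₁ Φ₁ b₁) (h₂ : IsDrift T α i D₂ Φ₂ b₂) :
    IsDrift T α i (fun r v => D₁ r v - D₂ r v) (fun r => Φ₁ r + Φ₂ r) (fun r => b₁ r + b₂ r) where
  measurable := h₁.measurable.sub h₂.measurable
  integrable_Φ := h₁.integrable_Φ.add h₂.integrable_Φ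
  Φ_nonneg r := add_nonneg (h₁.Φ_nonneg r) (h₂.Φ_nonneg r)
  integrable_b := h₁.integrable_b.add h₂.integrable_b
  b_nonneg r := add_nonneg (h₁.b_nonneg r) (h₂.b_nonneg r)
  map_zero r := by rw [h₁.map_zero, h₂.map_zero, sub_zero]
  abs_sub_le κ hκ := by
    obtain ⟨c₁, hc₁, e₁⟩ := h₁.abs_sub_le κ hκ
    obtain ⟨c₂, hc₂, e₂⟩ := h₂.abs_sub_le κ hκ
    refine ⟨c₁ + c₂, add_nonneg hc₁ hc₂, ?_⟩
    filter_upwards [e₁, e₂] with r hr₁ hr₂ v w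
    have k₁ := hr₁ v w
    have k₂ := hr₂ v w
    have k₃ : |D₁ r v - D₂ r v - (D₁ r w - D₂ r w)| ≤ |D₁ r v - D₁ r w| + |D₂ r v - D₂ r w| := by
      rw [sub_sub_sub_comm]
      exact abs_sub _ _
    linarith

section
variable {𝕏 : Type*} [MeasurableSpace 𝕏] {ν : Measure 𝕏}
  {H : Type*} [NormedAddCommGroup H] [InnerProductSpace ℝ H]
  {V : Type*} [NormedAddCommGroup V] [NormedSpace ℝ V]
  {T α : ℝ} {i : V →L[ℝ] H} {A : ℝ → V → (V →L[ℝ] ℝ)}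
  {f : ℝ → V → 𝕏 → H} {g : ℝ × 𝕏 → ℝ} {X : ℝ → H} {u : ℝ → V} {x : H}

theorem IsSkeletonSolution.integrableOn_norm_rpow (hX : IsSkeletonSolution T α ν i A f x g X u) :
    IntegrableOn (fun r => ‖u r‖ ^ α) (Set.Icc 0 T) := by
  refine ⟨(hX.2.1.norm.measurable.pow_const α).aestronglyMeasurable, ?_⟩
  rw [hasFiniteIntegral_iff_ofReal (Eventually.of_forall fun r => by positivity)]
  exact hX.2.2.2.1

theorem IsSkeletonSolution.apply_zero (hX : IsSkeletonSolution T α ν i A f x g X u) (hT : 0 ≤ T)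
    (hi : DenseRange i) : X 0 = x := by
  refine hi.eq_of_inner_left ℝ fun v => ?_
  rw [hX.2.2.2.2 0 ⟨le_rfl, hT⟩ v]
  simp

end

section
variable {𝕏 : Type*} [MeasurableSpace 𝕏] {ν : Measure 𝕏} [SigmaFinite ν]
  {H : Type*} [NormedAddCommGroup H] [InnerProductSpace ℝ H]
  [SecondCountableTopology H] [MeasurableSpace H] [BorelSpace H]
  {V : Type*} [NormedAddCommGroup V] [NormedSpace ℝ V]
  [SecondCountableTopology V] [MeasurableSpace V] [BorelSpace V]
  {T α β θ C : ℝ} {F : ℝ → ℝ} {i : V →L[ℝ] H} {A : ℝ → V → (V →L[ℝ] ℝ)}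
  {f : ℝ → V → 𝕏 → H} {Lf : ℝ × 𝕏 → ℝ} {g : ℝ × 𝕏 → ℝ} {X : ℝ → H} {u : ℝ → V} {x : H}

theorem IsSkeletonCoeff.isDrift (hc : IsSkeletonCoeff T α β θ C F i A f Lf)
    (hg : Measurable g)
    (hI : Integrable (fun q => Lf q * |g q - 1|) ((volume.restrict (Set.Icc 0 T)).prod ν))
    (hu : StronglyMeasurable u) (huα : IntegrableOn (fun r => ‖u r‖ ^ α) (Set.Icc 0 T))
    {M : ℝ} (hM0 : 0 ≤ M) (hM : ∀ᵐ r ∂(volume.restrict (Set.Icc 0 T)), ‖i (u r)‖ ≤ M) :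
    IsDrift T α i (skeletonDrift ν i A f g u)
      (fun r => (F r + C * ‖u r‖ ^ α) * (1 + M ^ β))
      (fun r => (1 + M) * ∫ z, Lf (r, z) * |g (r, z) - 1| ∂ν) where
  measurable := hc.measurable_drift hg hu
  integrable_Φ := hc.integrableOn_growth huα M
  Φ_nonneg r := by
    have := hc.hFnn r
    have := hc.hC
    positivity
  integrable_b := hI.integral_prod_left.const_mul _
  b_nonneg r := mul_nonneg (by positivity)
    (integral_nonneg fun z => mul_nonneg (hc.hLfnn _) (abs_nonneg _))
  map_zero r := by simp [skeletonDrift]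
  abs_sub_le κ hκ := by
    obtain ⟨c, hc0, hY⟩ := exists_mul_le_mul_rpow_add hc.hα hκ
    exact ⟨c, hc0, hc.abs_drift_sub_le hg hI hM hκ hY⟩

namespace IsSkeletonSolution

theorem inner_eq (hX : IsSkeletonSolution T α ν i A f x g X u)
    (hc : IsSkeletonCoeff T α β θ C F i A f Lf) (hg : Measurable g)
    (hI : Integrable (fun q => Lf q * |g q - 1|) ((volume.restrict (Set.Icc 0 T)).prod ν))
    {M : ℝ} (hM : ∀ᵐ r ∂(volume.restrict (Set.Icc 0 T)), ‖i (u r)‖ ≤ M)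
    {t : ℝ} (ht : t ∈ Set.Icc 0 T) (v : V) :
    ⟪X t, i v⟫ = ⟪x, i v⟫ + ∫ s in (0 : ℝ)..t, skeletonDrift ν i A f g u s v := by
  obtain ⟨i1, i2⟩ := hc.intervalIntegrable_drift hg hI hX.2.1 hX.integrableOn_norm_rpow hM v
  have hsub : Set.Icc 0 t ⊆ Set.Icc 0 T := Set.Icc_subset_Icc le_rfl ht.2
  rw [hX.2.2.2.2 t ht v, add_assoc, ← integral_add (i1.mono_set hsub) (i2.mono_set hsub),
    intervalIntegral.integral_of_le ht.1, integral_Icc_eq_integral_Ioc]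
  rfl

/-- A priori bounds for the skeleton equation. -/
theorem norm_sq_le (hX : IsSkeletonSolution T α ν i A f x g X u)
    (hc : IsSkeletonCoeff T α β θ C F i A f Lf) (hi : DenseRange i) (hg : Measurable g)
    (hI : Integrable (fun q => Lf q * |g q - 1|) ((volume.restrict (Set.Icc 0 T)).prod ν)) {S : ℝ}
    (hS : ∫ q, Lf q * |g q - 1| ∂((volume.restrict (Set.Icc 0 T)).prod ν) ≤ S) :
    (∀ t ∈ Set.Icc 0 T,
      1 + ‖X t‖ ^ 2 ≤ (1 + ‖x‖ ^ 2) * Real.exp ((∫ r in Set.Icc 0 T, F r) + 4 * S)) ∧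
    θ * ∫ r in Set.Icc 0 T, ‖u r‖ ^ α ≤ (1 + ‖x‖ ^ 2) * (1 + ((∫ r in Set.Icc 0 T, F r) + 4 * S)
      * Real.exp ((∫ r in Set.Icc 0 T, F r) + 4 * S)) := by
  have hT := hc.hT
  obtain ⟨hXc, hu, hiu, -, -⟩ := id hX
  have huα := hX.integrableOn_norm_rpow
  obtain ⟨M, hMX⟩ := isCompact_Icc.exists_bound_of_continuousOn hXc
  have hM0 : 0 ≤ M := (norm_nonneg _).trans (hMX 0 ⟨le_rfl, hT.le⟩)
  have hM : ∀ᵐ r ∂(volume.restrict (Set.Icc 0 T)), ‖i (u r)‖ ≤ M := by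
    filter_upwards [hiu, ae_restrict_mem measurableSet_Icc] with r hr hrm
    rw [hr]
    exact hMX r hrm
  have hd := hc.isDrift hg hI hu huα hM0 hM
  obtain ⟨hDI, hE⟩ := norm_sq_le_add_integral hT hc.hα hXc hu hiu huα hd.measurable
    hd.integrable_Φ hd.Φ_nonneg hd.integrable_b hd.b_nonneg hd.map_zero hd.abs_sub_le
    (fun t ht v => hX.inner_eq hc hg hI hM ht v)
  rw [hX.apply_zero hT.le hi] at hE
  set l : ℝ → ℝ := fun r => ∫ z, Lf (r, z) * |g (r, z) - 1| ∂ν with hl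
  have hl0 : ∀ r, 0 ≤ l r := fun r =>
    integral_nonneg fun z => mul_nonneg (hc.hLfnn _) (abs_nonneg _)
  have hlI : IntegrableOn l (Set.Icc 0 T) := hI.integral_prod_left
  have hlS : ∫ r in Set.Icc 0 T, l r ≤ S := by
    rw [hl, ← integral_prod _ hI]
    exact hS
  set k : ℝ → ℝ := fun r => F r + 4 * l r with hk
  have hk0 : ∀ r, 0 ≤ k r := fun r => by
    have := hc.hFnn r
    have := hl0 r
    positivity
  have hkI : IntegrableOn k (Set.Icc 0 T) := hc.hF.add (hlI.const_mul 4)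
  have hkS : ∫ r in Set.Icc 0 T, k r ≤ (∫ r in Set.Icc 0 T, F r) + 4 * S := by
    rw [hk, integral_add hc.hF (hlI.const_mul 4), integral_const_mul]
    linarith
  have hkyI : IntegrableOn (fun r => k r * (1 + ‖X r‖ ^ 2)) (Set.Icc 0 T) :=
    hkI.mul_continuousOn (continuousOn_const.add (hXc.norm.pow 2)) isCompact_Icc
  have hpt : ∀ᵐ r ∂(volume.restrict (Set.Icc 0 T)),
      2 * skeletonDrift ν i A f g u r (u r) + θ * ‖u r‖ ^ α ≤ k r * (1 + ‖X r‖ ^ 2) := by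
    filter_upwards [hc.ae_integrable_noise hg hI u, hiu, ae_restrict_mem measurableSet_Icc]
      with r hr hrX hrm
    have e1 := hc.coercive r hrm (u r)
    have e2 := (le_abs_self _).trans (hr (i (u r))).2
    rw [hrX] at e1 e2
    have e3 : (1 + ‖X r‖) * l r * ‖X r‖ ≤ 2 * (l r * (1 + ‖X r‖ ^ 2)) := by
      have : (1 + ‖X r‖) * ‖X r‖ ≤ 2 * (1 + ‖X r‖ ^ 2) := by nlinarith [sq_nonneg (‖X r‖ - 1)]
      nlinarith [hl0 r]
    simp only [skeletonDrift, hk]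
    rw [hrX]
    linarith
  have hEt : ∀ t ∈ Set.Icc 0 T, 1 + ‖X t‖ ^ 2 + θ * ∫ r in (0 : ℝ)..t, ‖u r‖ ^ α
      ≤ 1 + ‖x‖ ^ 2 + ∫ r in (0 : ℝ)..t, k r * (1 + ‖X r‖ ^ 2) := by
    intro t ht
    have hsub : Set.Icc 0 t ⊆ Set.Icc 0 T := Set.Icc_subset_Icc le_rfl ht.2
    have hsub' : Set.uIcc 0 t ⊆ Set.uIcc 0 T := by
      rwa [Set.uIcc_of_le ht.1, Set.uIcc_of_le hT.le]
    have j1 := hDI.mono_set hsub'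
    have j2 : IntervalIntegrable (fun r => ‖u r‖ ^ α) volume 0 t :=
      (intervalIntegrable_iff_integrableOn_Icc_of_le ht.1).2 (huα.mono_set hsub)
    have j3 : IntervalIntegrable (fun r => k r * (1 + ‖X r‖ ^ 2)) volume 0 t :=
      (intervalIntegrable_iff_integrableOn_Icc_of_le ht.1).2 (hkyI.mono_set hsub)
    have j4 := intervalIntegral.integral_mono_ae_restrict ht.1
      ((j1.const_mul 2).add (j2.const_mul θ)) j3
      (ae_restrict_of_ae_restrict_of_subset hsub hpt)
    rw [intervalIntegral.integral_add (j1.const_mul 2) (j2.const_mul θ),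
      intervalIntegral.integral_const_mul, intervalIntegral.integral_const_mul] at j4
    linarith [hE t ht]
  have hθu : ∀ t ∈ Set.Icc 0 T, 0 ≤ θ * ∫ r in (0 : ℝ)..t, ‖u r‖ ^ α := fun t ht =>
    mul_nonneg hc.hθ.le (intervalIntegral.integral_nonneg ht.1 fun r _ => by positivity)
  have hII : ∀ G : ℝ → ℝ, ∫ r in (0 : ℝ)..T, G r = ∫ r in Set.Icc 0 T, G r := fun G => by
    rw [intervalIntegral.integral_of_le hT.le, integral_Icc_eq_integral_Ioc]
  have hx0 : 0 ≤ 1 + ‖x‖ ^ 2 := by positivity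
  have hbound : ∀ t ∈ Set.Icc 0 T,
      1 + ‖X t‖ ^ 2 ≤ (1 + ‖x‖ ^ 2) * Real.exp ((∫ r in Set.Icc 0 T, F r) + 4 * S) := by
    intro t ht
    refine (le_mul_exp_of_le_add_integral_mul
      ((intervalIntegrable_iff_integrableOn_Icc_of_le hT.le).2 hkI) hk0 hx0
      ((intervalIntegrable_iff_integrableOn_Icc_of_le hT.le).2 hkyI) (M := 1 + M ^ 2)
      (fun s hs => ?_) (fun s hs => ?_) t ht).trans ?_
    · have := hMX s hs
      gcongr
    · linarith [hEt s hs, hθu s hs]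
    · rw [hII]
      gcongr
  refine ⟨hbound, ?_⟩
  have hlast := hEt T ⟨hT.le, le_rfl⟩
  rw [hII, hII] at hlast
  set E : ℝ := Real.exp ((∫ r in Set.Icc 0 T, F r) + 4 * S) with hEdef
  have hky : ∫ r in Set.Icc 0 T, k r * (1 + ‖X r‖ ^ 2)
      ≤ ((∫ r in Set.Icc 0 T, F r) + 4 * S) * ((1 + ‖x‖ ^ 2) * E) := by
    refine (setIntegral_mono_on hkyI (hkI.mul_const ((1 + ‖x‖ ^ 2) * E)) measurableSet_Icc
      fun r hr => mul_le_mul_of_nonneg_left (hbound r hr) (hk0 r)).trans ?_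
    rw [integral_mul_const]
    gcongr
  nlinarith [sq_nonneg ‖X T‖]

end IsSkeletonSolution

end

section
variable {𝕏 : Type*} [MeasurableSpace 𝕏] {ν : Measure 𝕏} [SigmaFinite ν]
  {H : Type*} [NormedAddCommGroup H] [InnerProductSpace ℝ H]
  [SecondCountableTopology H] [MeasurableSpace H] [BorelSpace H]
  {V : Type*} [NormedAddCommGroup V] [NormedSpace ℝ V]
  [SecondCountableTopology V] [MeasurableSpace V] [BorelSpace V]
  {T α β θ C : ℝ} {F : ℝ → ℝ} {i : V →L[ℝ] H} {A : ℝ → V → (V →L[ℝ] ℝ)}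
  {f : ℝ → V → 𝕏 → H} {Lf : ℝ × 𝕏 → ℝ} {g : ℝ × 𝕏 → ℝ} {X : ℝ → H} {u : ℝ → V} {x : H}

theorem IsSkeletonCoeff.integral_abs_drift_le (hc : IsSkeletonCoeff T α β θ C F i A f Lf)
    (hg : Measurable g)
    (hI : Integrable (fun q => Lf q * |g q - 1|) ((volume.restrict (Set.Icc 0 T)).prod ν)) {S : ℝ}
    (hS : ∫ q, Lf q * |g q - 1| ∂((volume.restrict (Set.Icc 0 T)).prod ν) ≤ S)
    (hu : StronglyMeasurable u) (huα : IntegrableOn (fun r => ‖u r‖ ^ α) (Set.Icc 0 T))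
    {U : ℝ} (hU : ∫ r in Set.Icc 0 T, ‖u r‖ ^ α ≤ U)
    {M : ℝ} (hM0 : 0 ≤ M) (hM : ∀ᵐ r ∂(volume.restrict (Set.Icc 0 T)), ‖i (u r)‖ ≤ M) {c : ℝ}
    (hY : ∀ a d : ℝ, 0 ≤ a → 0 ≤ d → a * d ≤ 1 * a ^ (α / (α - 1)) + c * d ^ α) (v : V) :
    IntervalIntegrable (fun r => skeletonDrift ν i A f g u r v) volume 0 T ∧
      ∫ r in (0 : ℝ)..T, |skeletonDrift ν i A f g u r v|
        ≤ ((∫ r in Set.Icc 0 T, F r) + C * U) * (1 + M ^ β) + T * (c * ‖v‖ ^ α)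
          + (1 + M) * S * ‖i v‖ := by
  obtain ⟨i1, i2⟩ := hc.intervalIntegrable_drift hg hI hu huα hM v
  have hDI : IntegrableOn (fun r => skeletonDrift ν i A f g u r v) (Set.Icc 0 T) := i1.add i2
  refine ⟨(intervalIntegrable_iff_integrableOn_Icc_of_le hc.hT.le).2 hDI, ?_⟩
  have hT := hc.hT
  have hconst : IntegrableOn (fun _ : ℝ => c * ‖v‖ ^ α) (Set.Icc 0 T) :=
    integrableOn_const (by simp [Real.volume_Icc])
  have hl := (hI.integral_prod_left.const_mul (1 + M)).mul_const ‖i v‖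
  have hΦ := hc.integrableOn_growth huα M
  have hΦc : IntegrableOn (fun r => (F r + C * ‖u r‖ ^ α) * (1 + M ^ β) + c * ‖v‖ ^ α)
      (Set.Icc 0 T) := hΦ.add hconst
  rw [intervalIntegral.integral_of_le hT.le, ← integral_Icc_eq_integral_Ioc]
  refine (integral_mono_ae hDI.norm (hΦc.add hl) ?_).trans ?_
  · filter_upwards [hc.abs_drift_sub_le hg hI hM one_pos hY] with r hr
    have := hr v 0
    simpa [skeletonDrift] using this
  · simp only [Pi.add_apply]
    rw [integral_add hΦc hl, integral_add hΦ hconst, setIntegral_const,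
      integral_mul_const, integral_mul_const, integral_add hc.hF (huα.const_mul C),
      integral_const_mul, integral_const_mul, ← integral_prod _ hI]
    have hCC := hc.hC
    have hvol : volume.real (Set.Icc 0 T) = T := by simp [Real.volume_real_Icc, hT.le]
    rw [hvol, smul_eq_mul]
    gcongr

/-- Stability of the skeleton equation with respect to the control. -/
theorem IsSkeletonSolution.norm_sub_sq_le {g₁ : ℝ × 𝕏 → ℝ} {X₁ : ℝ → H} {u₁ : ℝ → V}
    (hX₁ : IsSkeletonSolution T α ν i A f x g₁ X₁ u₁)
    (hX : IsSkeletonSolution T α ν i A f x g X u)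
    (hc : IsSkeletonCoeff T α β θ C F i A f Lf) (hi : DenseRange i)
    (hg₁ : Measurable g₁) (hg : Measurable g)
    (hI₁ : Integrable (fun q => Lf q * |g₁ q - 1|) ((volume.restrict (Set.Icc 0 T)).prod ν))
    (hI : Integrable (fun q => Lf q * |g q - 1|) ((volume.restrict (Set.Icc 0 T)).prod ν))
    {K : ℝ → ℝ} (hKnn : ∀ t, 0 ≤ K t) (hK : IntegrableOn K (Set.Icc 0 T))
    {ρ : V → ℝ} (hρnn : ∀ v, 0 ≤ ρ v) (hρu : IntegrableOn (fun r => ρ (u r)) (Set.Icc 0 T))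
    (hmono : ∀ t ∈ Set.Icc (0 : ℝ) T, ∀ v₁ v₂ : V,
      2 * (A t v₁ (v₁ - v₂) - A t v₂ (v₁ - v₂)) ≤ (K t + ρ v₂) * ‖i v₁ - i v₂‖ ^ (2 : ℕ))
    {Gf : ℝ × 𝕏 → ℝ} (hGfnn : ∀ q, 0 ≤ Gf q)
    (hlip : ∀ t ∈ Set.Icc (0 : ℝ) T, ∀ (v₁ v₂ : V) (z : 𝕏),
      ‖f t v₁ z - f t v₂ z‖ ≤ Gf (t, z) * ‖i v₁ - i v₂‖)
    (hIG : Integrable (fun q => Gf q * |g₁ q - 1|) ((volume.restrict (Set.Icc 0 T)).prod ν)) {S : ℝ}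
    (hS : ∫ q, Gf q * |g₁ q - 1| ∂((volume.restrict (Set.Icc 0 T)).prod ν) ≤ S)
    (hEI : IntervalIntegrable (fun s => ∫ z, ⟪f s (u s) z, i (u₁ s - u s)⟫
      * (g₁ (s, z) - g (s, z)) ∂ν) volume 0 T) {R : ℝ} (hR0 : 0 ≤ R)
    (hR : ∀ t ∈ Set.Icc 0 T, |∫ s in (0 : ℝ)..t, ∫ z, ⟪f s (u s) z, i (u₁ s - u s)⟫
      * (g₁ (s, z) - g (s, z)) ∂ν| ≤ R) :
    ∀ t ∈ Set.Icc 0 T, ‖X₁ t - X t‖ ^ 2 ≤ 2 * R * Real.exp ((∫ r in Set.Icc 0 T, K r)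
      + (∫ r in Set.Icc 0 T, ρ (u r)) + 2 * S) := by
  have hT := hc.hT
  have huα := hX.integrableOn_norm_rpow
  have hu₁α := hX₁.integrableOn_norm_rpow
  obtain ⟨hXc, hu, hiu, -, -⟩ := id hX
  obtain ⟨hX₁c, hu₁, hiu₁, -, -⟩ := id hX₁
  have hbdd : ∀ {Y : ℝ → H} {y : ℝ → V}, ContinuousOn Y (Set.Icc 0 T) →
      (∀ᵐ t ∂(volume.restrict (Set.Icc 0 T)), i (y t) = Y t) → ∃ M, 0 ≤ M ∧
        ∀ᵐ r ∂(volume.restrict (Set.Icc 0 T)), ‖i (y r)‖ ≤ M := by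
    intro Y y hY hy
    obtain ⟨M, hMX⟩ := isCompact_Icc.exists_bound_of_continuousOn hY
    refine ⟨M, (norm_nonneg _).trans (hMX 0 ⟨le_rfl, hT.le⟩), ?_⟩
    filter_upwards [hy, ae_restrict_mem measurableSet_Icc] with r hr hrm
    rw [hr]
    exact hMX r hrm
  obtain ⟨M, hM0, hM⟩ := hbdd hXc hiu
  obtain ⟨M₁, hM₁0, hM₁⟩ := hbdd hX₁c hiu₁
  have hd := (hc.isDrift hg₁ hI₁ hu₁ hu₁α hM₁0 hM₁).sub (hc.isDrift hg hI hu huα hM0 hM)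
  have hDint : ∀ t ∈ Set.Icc 0 T, ∀ v : V, ⟪X₁ t - X t, i v⟫ = ⟪(0 : H), i v⟫
      + ∫ s in (0 : ℝ)..t, (skeletonDrift ν i A f g₁ u₁ s v - skeletonDrift ν i A f g u s v) := by
    intro t ht v
    have hsub : Set.Icc 0 t ⊆ Set.Icc 0 T := Set.Icc_subset_Icc le_rfl ht.2
    obtain ⟨i1, i2⟩ := hc.intervalIntegrable_drift hg hI hu huα hM v
    obtain ⟨i3, i4⟩ := hc.intervalIntegrable_drift hg₁ hI₁ hu₁ hu₁α hM₁ v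
    have j1 : IntervalIntegrable (fun r => skeletonDrift ν i A f g u r v) volume 0 t :=
      (intervalIntegrable_iff_integrableOn_Icc_of_le ht.1).2
        ((i1.mono_set hsub).add (i2.mono_set hsub))
    have j2 : IntervalIntegrable (fun r => skeletonDrift ν i A f g₁ u₁ r v) volume 0 t :=
      (intervalIntegrable_iff_integrableOn_Icc_of_le ht.1).2
        ((i3.mono_set hsub).add (i4.mono_set hsub))
    rw [inner_sub_left, hX₁.inner_eq hc hg₁ hI₁ hM₁ ht v, hX.inner_eq hc hg hI hM ht v,
      intervalIntegral.integral_sub j2 j1, inner_zero_left]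
    ring
  have hiw : ∀ᵐ t ∂(volume.restrict (Set.Icc 0 T)), i (u₁ t - u t) = X₁ t - X t := by
    filter_upwards [hiu, hiu₁] with t h h₁
    rw [map_sub, h, h₁]
  have hα0 : 0 < α := by linarith [hc.hα]
  have hwα : IntegrableOn (fun r => ‖u₁ r - u r‖ ^ α) (Set.Icc 0 T) := by
    have hm : ∀ {y : ℝ → V}, StronglyMeasurable y →
        (IntegrableOn (fun r => ‖y r‖ ^ α) (Set.Icc 0 T) ↔
          MemLp y (ENNReal.ofReal α) (volume.restrict (Set.Icc 0 T))) := by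
      intro y hy
      rw [← integrable_norm_rpow_iff hy.aestronglyMeasurable (by simpa using hα0)
        ENNReal.ofReal_ne_top, ENNReal.toReal_ofReal hα0.le, IntegrableOn]
    exact (hm (hu₁.sub hu)).2 (((hm hu₁).1 hu₁α).sub ((hm hu).1 huα))
  have hwc : ContinuousOn (fun t => X₁ t - X t) (Set.Icc 0 T) := hX₁c.sub hXc
  obtain ⟨hDI, hE⟩ := norm_sq_le_add_integral hT hc.hα hwc (hu₁.sub hu) hiw hwα
    hd.measurable hd.integrable_Φ hd.Φ_nonneg hd.integrable_b hd.b_nonneg hd.map_zero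
    hd.abs_sub_le hDint
  rw [hX.apply_zero hT.le hi, hX₁.apply_zero hT.le hi, sub_self, norm_zero] at hE
  set Γ : ℝ → ℝ := fun r => ∫ z, Gf (r, z) * |g₁ (r, z) - 1| ∂ν with hΓ
  have hΓ0 : ∀ r, 0 ≤ Γ r := fun r => integral_nonneg fun z => mul_nonneg (hGfnn _) (abs_nonneg _)
  have hΓI : IntegrableOn Γ (Set.Icc 0 T) := hIG.integral_prod_left
  have hΓS : ∫ r in Set.Icc 0 T, Γ r ≤ S := by
    rw [hΓ, ← integral_prod _ hIG]
    exact hS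
  set k : ℝ → ℝ := fun r => K r + ρ (u r) + 2 * Γ r with hk
  have hk0 : ∀ r, 0 ≤ k r := fun r => by
    have := hKnn r
    have := hρnn (u r)
    have := hΓ0 r
    positivity
  have hkI : IntegrableOn k (Set.Icc 0 T) := (hK.add hρu).add (hΓI.const_mul 2)
  have hkS : ∫ r in Set.Icc 0 T, k r ≤ (∫ r in Set.Icc 0 T, K r)
      + (∫ r in Set.Icc 0 T, ρ (u r)) + 2 * S := by
    have hKρ : IntegrableOn (fun r => K r + ρ (u r)) (Set.Icc 0 T) := hK.add hρu
    rw [hk, integral_add hKρ (hΓI.const_mul 2), integral_const_mul, integral_add hK hρu]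
    linarith
  have hkyI : IntegrableOn (fun r => k r * ‖X₁ r - X r‖ ^ 2) (Set.Icc 0 T) :=
    hkI.mul_continuousOn (hwc.norm.pow 2) isCompact_Icc
  set E : ℝ → ℝ := fun s => ∫ z, ⟪f s (u s) z, i (u₁ s - u s)⟫ * (g₁ (s, z) - g (s, z)) ∂ν with hEdef
  have hpt : ∀ᵐ r ∂(volume.restrict (Set.Icc 0 T)),
      2 * (skeletonDrift ν i A f g₁ u₁ r (u₁ r - u r) - skeletonDrift ν i A f g u r (u₁ r - u r))
        ≤ k r * ‖X₁ r - X r‖ ^ 2 + 2 * E r := by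
    filter_upwards [hc.ae_integrable_noise hg₁ hI₁ u₁, hc.ae_integrable_noise hg₁ hI₁ u,
      hc.ae_integrable_noise hg hI u, hIG.prod_right_ae, hiw,
      ae_restrict_mem measurableSet_Icc] with r h1 h2 h3 h4 hrX hrm
    have p1 := (h1 (i (u₁ r - u r))).1
    have p2 := (h2 (i (u₁ r - u r))).1
    have p3 := (h3 (i (u₁ r - u r))).1
    have hfr : ∀ v : V, Measurable (f r v) := fun v =>
      hc.hfm.comp (measurable_const.prodMk (measurable_const.prodMk measurable_id))
    have e1 := (le_abs_self _).trans (integrable_inner_mul_sub_one ((hfr (u₁ r)).sub (hfr (u r)))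
      (hg₁.comp (measurable_const.prodMk measurable_id)) h4
      (hlip r hrm (u₁ r) (u r)) (i (u₁ r - u r))).2
    have e2 : ∫ z, ⟪f r (u₁ r) z - f r (u r) z, i (u₁ r - u r)⟫ * (g₁ (r, z) - 1) ∂ν
        = (∫ z, ⟪f r (u₁ r) z, i (u₁ r - u r)⟫ * (g₁ (r, z) - 1) ∂ν)
          - ∫ z, ⟪f r (u r) z, i (u₁ r - u r)⟫ * (g₁ (r, z) - 1) ∂ν := by
      rw [← integral_sub p1 p2]
      refine integral_congr_ae (Eventually.of_forall fun z => ?_)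
      simp only [inner_sub_left]
      ring
    have e3 : E r = (∫ z, ⟪f r (u r) z, i (u₁ r - u r)⟫ * (g₁ (r, z) - 1) ∂ν)
          - ∫ z, ⟪f r (u r) z, i (u₁ r - u r)⟫ * (g (r, z) - 1) ∂ν := by
      rw [← integral_sub p2 p3]
      refine integral_congr_ae (Eventually.of_forall fun z => ?_)
      simp only
      ring
    have e4 := hmono r hrm (u₁ r) (u r)
    have e5 : ∫ z, ⟪f r (u₁ r) z - f r (u r) z, i (u₁ r - u r)⟫ * (g₁ (r, z) - 1) ∂ν
        ≤ Γ r * ‖X₁ r - X r‖ ^ 2 := by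
      refine e1.trans (le_of_eq ?_)
      rw [← map_sub, hrX]
      simp only [hΓ, Function.comp_apply, id_eq]
      ring
    rw [← map_sub, hrX] at e4
    simp only [skeletonDrift, hk]
    rw [e3]
    linarith
  have hII : ∫ r in (0 : ℝ)..T, k r = ∫ r in Set.Icc 0 T, k r := by
    rw [intervalIntegral.integral_of_le hT.le, integral_Icc_eq_integral_Ioc]
  obtain ⟨B, hB⟩ := isCompact_Icc.exists_bound_of_continuousOn hwc
  intro t ht
  refine (le_mul_exp_of_le_add_integral_mul
      ((intervalIntegrable_iff_integrableOn_Icc_of_le hT.le).2 hkI) hk0 (by positivity)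
      ((intervalIntegrable_iff_integrableOn_Icc_of_le hT.le).2 hkyI) (M := B ^ 2)
      (y := fun t => ‖X₁ t - X t‖ ^ 2) (a := 2 * R) (fun s hs => ?_) (fun s hs => ?_) t ht).trans ?_
  · have := hB s hs
    gcongr
  · have hsub : Set.Icc 0 s ⊆ Set.Icc 0 T := Set.Icc_subset_Icc le_rfl hs.2
    have hsub' : Set.uIcc 0 s ⊆ Set.uIcc 0 T := by
      rwa [Set.uIcc_of_le hs.1, Set.uIcc_of_le hT.le]
    have j1 := hDI.mono_set hsub'
    have j2 := hEI.mono_set hsub'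
    have j3 : IntervalIntegrable (fun r => k r * ‖X₁ r - X r‖ ^ 2) volume 0 s :=
      (intervalIntegrable_iff_integrableOn_Icc_of_le hs.1).2 (hkyI.mono_set hsub)
    have j4 := intervalIntegral.integral_mono_ae_restrict hs.1
      (j1.const_mul 2) (j3.add (j2.const_mul 2))
      (ae_restrict_of_ae_restrict_of_subset hsub hpt)
    rw [intervalIntegral.integral_add j3 (j2.const_mul 2),
      intervalIntegral.integral_const_mul, intervalIntegral.integral_const_mul] at j4
    have j5 := (le_abs_self _).trans (hR s hs)
    have j6 := hE s hs
    simp only [Pi.sub_apply] at j4 j6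
    linarith
  · rw [hII]
    gcongr

end

theorem tendsto_setIntegral_restrict_prod {𝕏 : Type*} [TopologicalSpace 𝕏] [PolishSpace 𝕏]
    [LocallyCompactSpace 𝕏] [MeasurableSpace 𝕏] [BorelSpace 𝕏] {ν : Measure 𝕏} [SigmaFinite ν]
    (hνK : ∀ Kc : Set 𝕏, IsCompact Kc → ν Kc < ⊤) {T : ℝ} {gn : ℕ → ℝ × 𝕏 → ℝ} {g : ℝ × 𝕏 → ℝ}
    {N : ℕ} (hgn : ∀ n, Measurable (gn n) ∧ (∀ q, 0 ≤ gn n q) ∧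
      (∫⁻ q, ENNReal.ofReal (gn n q * Real.log (gn n q) - gn n q + 1)
        ∂((volume.restrict (Set.Icc 0 T)).prod ν)) ≤ (N : ℝ≥0∞))
    (hg : Measurable g ∧ (∀ q, 0 ≤ g q) ∧
      (∫⁻ q, ENNReal.ofReal (g q * Real.log (g q) - g q + 1)
        ∂((volume.restrict (Set.Icc 0 T)).prod ν)) ≤ (N : ℝ≥0∞))
    (hconv : ∀ φ : ℝ × 𝕏 → ℝ, Continuous φ → HasCompactSupport φ →
      Tendsto (fun n => ∫ q, φ q * gn n q ∂((volume.restrict (Set.Icc 0 T)).prod ν)) atTop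
        (nhds (∫ q, φ q * g q ∂((volume.restrict (Set.Icc 0 T)).prod ν))))
    {B : Set (ℝ × 𝕏)} (hB : MeasurableSet B)
    (hBfin : (volume.restrict (Set.Icc 0 T)).prod ν B < ⊤) :
    Tendsto (fun n => ∫ q in B, gn n q ∂((volume.restrict (Set.Icc 0 T)).prod ν)) atTop
      (nhds (∫ q in B, g q ∂((volume.restrict (Set.Icc 0 T)).prod ν))) := by
  let := TopologicalSpace.upgradeIsCompletelyMetrizable 𝕏
  have : IsLocallyFiniteMeasure ν := ⟨fun y => by
    obtain ⟨s, hs, hy⟩ := exists_compact_mem_nhds y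
    exact ⟨s, hy, hνK s hs⟩⟩
  exact tendsto_setIntegral_of_entropy hgn hg hconv hB hBfin

theorem stmt_11
    {𝕏 : Type*} [TopologicalSpace 𝕏] [PolishSpace 𝕏] [LocallyCompactSpace 𝕏]
    [MeasurableSpace 𝕏] [BorelSpace 𝕏]
    {H : Type*} [NormedAddCommGroup H] [InnerProductSpace ℝ H]
    [TopologicalSpace.SeparableSpace H] [MeasurableSpace H] [BorelSpace H]
    {V : Type*} [NormedAddCommGroup V] [NormedSpace ℝ V]
    [TopologicalSpace.SeparableSpace V] [MeasurableSpace V] [BorelSpace V]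
    (hVrefl : Function.Surjective (NormedSpace.inclusionInDoubleDual ℝ V))
    (T : ℝ) (hT : 0 < T)
    (ν : Measure 𝕏) [SigmaFinite ν] (hνK : ∀ Kc : Set 𝕏, IsCompact Kc → ν Kc < ⊤)
    (νT : Measure (ℝ × 𝕏)) (hνT : νT = (volume.restrict (Set.Icc 0 T)).prod ν)
    (α β θ C : ℝ) (hα : 1 < α) (hβ : 0 ≤ β) (hθ : 0 < θ) (hC : 0 < C)
    (F K : ℝ → ℝ) (hFnn : ∀ t, 0 ≤ F t) (hKnn : ∀ t, 0 ≤ K t)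
    (hF : IntegrableOn F (Set.Icc 0 T)) (hK : IntegrableOn K (Set.Icc 0 T))
    (ρ : V → ℝ) (hρm : Measurable ρ) (hρnn : ∀ v, 0 ≤ ρ v)
    (hρb : ∀ R : ℝ, ∃ M : ℝ, ∀ v : V, ‖v‖ ≤ R → ρ v ≤ M)
    (i : V →L[ℝ] H) (hiInj : Function.Injective i) (hiDense : DenseRange i)
    (hiCpt : IsCompactOperator (⇑i))
    (A : ℝ → V → V →L[ℝ] ℝ)
    (hAm : ∀ v : V, Measurable fun q : ℝ × V => A q.1 q.2 v)
    (f : ℝ → V → 𝕏 → H)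
    (hfm : Measurable fun q : ℝ × V × 𝕏 => f q.1 q.2.1 q.2.2)
    (h1 : ∀ t ∈ Set.Icc (0 : ℝ) T, ∀ v₁ v₂ v : V,
      Continuous fun s : ℝ => A t (v₁ + s • v₂) v)
    (h2 : ∀ t ∈ Set.Icc (0 : ℝ) T, ∀ v₁ v₂ : V,
      2 * (A t v₁ (v₁ - v₂) - A t v₂ (v₁ - v₂))
          + ∫ z, ‖f t v₁ z - f t v₂ z‖ ^ (2 : ℕ) ∂ν
        ≤ (K t + ρ v₂) * ‖i v₁ - i v₂‖ ^ (2 : ℕ))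
    (h3 : ∀ t ∈ Set.Icc (0 : ℝ) T, ∀ v : V,
      2 * A t v v + θ * ‖v‖ ^ α ≤ F t * (1 + ‖i v‖ ^ (2 : ℕ)))
    (h4 : ∀ t ∈ Set.Icc (0 : ℝ) T, ∀ v : V,
      ‖A t v‖ ^ (α / (α - 1)) ≤ (F t + C * ‖v‖ ^ α) * (1 + ‖i v‖ ^ β))
    (Lf : ℝ × 𝕏 → ℝ) (hLfm : Measurable Lf) (hLfnn : ∀ q, 0 ≤ Lf q)
    (η₀ p Υ : ℝ) (hη₀ : 0 < η₀)
    (hΥ : Υ = max (max (2 * β * (α - 1) * (α + η₀) / α)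
        (4 * (α - 1) * (α + η₀) / α)) (max 4 (β + 2)))
    (hpΥ : Υ ≤ p)
    (hLfint : ∀ r ∈ ({2, 4, β + 2, Υ, Υ / 2} : Set ℝ),
      ∫⁻ q, ENNReal.ofReal (Lf q ^ r) ∂νT < ⊤)
    (hLfH : ∃ δ : ℝ, 0 < δ ∧ ∀ Γ : Set (ℝ × 𝕏), MeasurableSet Γ → νT Γ < ⊤ →
      ∫⁻ q in Γ, ENNReal.ofReal (Real.exp (δ * Lf q ^ p)) ∂νT < ⊤)
    (h5 : ∀ t ∈ Set.Icc (0 : ℝ) T, ∀ (v : V) (z : 𝕏),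
      ‖f t v z‖ ≤ Lf (t, z) * (1 + ‖i v‖))
    (Gf : ℝ × 𝕏 → ℝ) (hGfm : Measurable Gf) (hGfnn : ∀ q, 0 ≤ Gf q)
    (hGfint : ∫⁻ q, ENNReal.ofReal (Gf q ^ (2 : ℕ)) ∂νT < ⊤)
    (hGfH : ∃ δ : ℝ, 0 < δ ∧ ∀ Γ : Set (ℝ × 𝕏), MeasurableSet Γ → νT Γ < ⊤ →
      ∫⁻ q in Γ, ENNReal.ofReal (Real.exp (δ * Gf q ^ (2 : ℝ))) ∂νT < ⊤)
    (h6 : ∀ t ∈ Set.Icc (0 : ℝ) T, ∀ (v₁ v₂ : V) (z : 𝕏),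
      ‖f t v₁ z - f t v₂ z‖ ≤ Gf (t, z) * ‖i v₁ - i v₂‖)
    (hρgrow : ∀ v : V, ρ v ≤ C * (1 + ‖v‖ ^ α) * (1 + ‖i v‖ ^ β))
    (N : ℕ) (x : H) (gn : ℕ → ℝ × 𝕏 → ℝ) (g : ℝ × 𝕏 → ℝ)
    (hgn : ∀ n, Measurable (gn n) ∧ (∀ q, 0 ≤ gn n q) ∧
      (∫⁻ q, ENNReal.ofReal (gn n q * Real.log (gn n q) - gn n q + 1) ∂νT) ≤ (N : ℝ≥0∞))
    (hg : Measurable g ∧ (∀ q, 0 ≤ g q) ∧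
      (∫⁻ q, ENNReal.ofReal (g q * Real.log (g q) - g q + 1) ∂νT) ≤ (N : ℝ≥0∞))
    (hconv : ∀ φ : ℝ × 𝕏 → ℝ, Continuous φ → HasCompactSupport φ →
      Tendsto (fun n => ∫ q, φ q * gn n q ∂νT) atTop (nhds (∫ q, φ q * g q ∂νT)))
    (Xn : ℕ → ℝ → H) (un : ℕ → ℝ → V)
    (hXn : ∀ n, IsSkeletonSolution T α ν i A f x (gn n) (Xn n) (un n))
    (X : ℝ → H) (u : ℝ → V)
    (hX : IsSkeletonSolution T α ν i A f x g X u) :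
    ∀ ε : ℝ, 0 < ε → ∃ n₀ : ℕ, ∀ n ≥ n₀, ∀ t ∈ Set.Icc (0 : ℝ) T, ‖Xn n t - X t‖ ≤ ε := by
  subst hνT
  have := UniformSpace.secondCountable_of_separable H
  have := UniformSpace.secondCountable_of_separable V
  have hp : 2 ≤ p := by
    have : (4 : ℝ) ≤ Υ := hΥ ▸ (le_max_left _ _).trans (le_max_right _ _)
    linarith
  have hLf2 : ∫⁻ q, ENNReal.ofReal (Lf q ^ (2 : ℕ)) ∂((volume.restrict (Set.Icc 0 T)).prod ν) < ⊤ := by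
    simpa only [Real.rpow_two] using hLfint 2 (by simp)
  have hLfexp : ∀ σ : ℝ, 0 ≤ σ → Integrable (fun q => Lf q ^ 2 * Real.exp (σ * Lf q))
      ((volume.restrict (Set.Icc 0 T)).prod ν) :=
    fun σ hσ => integrable_sq_mul_exp hLfm hLfnn hp hLf2 hLfH hσ
  have hGfexp := integrable_sq_mul_exp hGfm hGfnn le_rfl hGfint hGfH zero_le_one
  have hLfg := fun {b : ℝ × 𝕏 → ℝ} (hb : Measurable b ∧ (∀ q, 0 ≤ b q) ∧
      (∫⁻ q, ENNReal.ofReal (b q * Real.log (b q) - b q + 1)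
        ∂((volume.restrict (Set.Icc 0 T)).prod ν)) ≤ (N : ℝ≥0∞)) =>
    integrable_mul_abs_sub_one hb.1 hb.2.1 hb.2.2 one_pos hLfm.aestronglyMeasurable hLfnn
      (hLfexp 1 zero_le_one)
  have hGfg := fun n => integrable_mul_abs_sub_one (hgn n).1 (hgn n).2.1 (hgn n).2.2 one_pos
    hGfm.aestronglyMeasurable hGfnn hGfexp
  set S : ℝ := N / 1 + 1 * ∫ q, Lf q ^ 2 * Real.exp (1 * Lf q)
    ∂((volume.restrict (Set.Icc 0 T)).prod ν)
  set S' : ℝ := N / 1 + 1 * ∫ q, Gf q ^ 2 * Real.exp (1 * Gf q)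
    ∂((volume.restrict (Set.Icc 0 T)).prod ν)
  have hc : IsSkeletonCoeff T α β θ C F i A f Lf :=
    ⟨hT, hα, hβ, hθ, hC, hFnn, hF, hAm, hfm, h3, h4, hLfm, hLfnn, h5⟩
  obtain ⟨M, U, hM0, hbound⟩ : ∃ M U : ℝ, 0 ≤ M ∧ ∀ {b : ℝ × 𝕏 → ℝ} {Y : ℝ → H} {y : ℝ → V},
      (Measurable b ∧ (∀ q, 0 ≤ b q) ∧ (∫⁻ q, ENNReal.ofReal (b q * Real.log (b q) - b q + 1)
        ∂((volume.restrict (Set.Icc 0 T)).prod ν)) ≤ (N : ℝ≥0∞)) →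
      IsSkeletonSolution T α ν i A f x b Y y →
      (∀ᵐ r ∂(volume.restrict (Set.Icc 0 T)), ‖i (y r)‖ ≤ M) ∧
        ∫ r in Set.Icc 0 T, ‖y r‖ ^ α ≤ U := by
    refine ⟨(1 + ‖x‖ ^ 2) * Real.exp ((∫ r in Set.Icc 0 T, F r) + 4 * S),
      (1 + ‖x‖ ^ 2) * (1 + ((∫ r in Set.Icc 0 T, F r) + 4 * S)
        * Real.exp ((∫ r in Set.Icc 0 T, F r) + 4 * S)) / θ, by positivity, ?_⟩
    intro b Y y hb hY
    obtain ⟨hb1, hb2⟩ := hY.norm_sq_le hc hiDense hb.1 (hLfg hb).1 (hLfg hb).2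
    refine ⟨?_, (le_div_iff₀' hθ).2 hb2⟩
    filter_upwards [hY.2.2.1, ae_restrict_mem measurableSet_Icc] with r hr hrm
    rw [hr]
    nlinarith [hb1 r hrm, sq_nonneg (‖Y r‖ - 1)]
  have hu := hX.2.1
  have huα := hX.integrableOn_norm_rpow
  obtain ⟨hM, hU⟩ := hbound hg hX
  have hMn := fun n => (hbound (hgn n) (hXn n)).1
  obtain ⟨c, hc0, hY⟩ := exists_mul_le_mul_rpow_add hα one_pos
  have hρu : IntegrableOn (fun r => ρ (u r)) (Set.Icc 0 T) := by
    have hconst : IntegrableOn (fun _ : ℝ => (1 : ℝ)) (Set.Icc 0 T) :=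
      integrableOn_const (by simp [Real.volume_Icc])
    refine Integrable.mono' (((hconst.add huα).const_mul C).mul_const (1 + M ^ β))
      (hρm.comp hu.measurable).aestronglyMeasurable ?_
    filter_upwards [hM] with r hr
    rw [Real.norm_of_nonneg (hρnn _)]
    refine (hρgrow _).trans ?_
    simp only [Pi.add_apply]
    gcongr
  have hmono : ∀ t ∈ Set.Icc (0 : ℝ) T, ∀ v₁ v₂ : V,
      2 * (A t v₁ (v₁ - v₂) - A t v₂ (v₁ - v₂)) ≤ (K t + ρ v₂) * ‖i v₁ - i v₂‖ ^ (2 : ℕ) :=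
    fun t ht v₁ v₂ => (le_add_of_nonneg_right (integral_nonneg fun z => by positivity)).trans
      (h2 t ht v₁ v₂)
  have hφm : Measurable fun q : ℝ × 𝕏 => f q.1 (u q.1) q.2 :=
    hfm.comp (measurable_fst.prodMk ((hu.measurable.comp measurable_fst).prodMk measurable_snd))
  have hφ : ∀ᵐ q ∂((volume.restrict (Set.Icc 0 T)).prod ν),
      ‖f q.1 (u q.1) q.2‖ ≤ (1 + M) * Lf q := by
    filter_upwards [Measure.quasiMeasurePreserving_fst.ae hM,
      Measure.quasiMeasurePreserving_fst.ae (ae_restrict_mem measurableSet_Icc)] with q hq hqm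
    refine (h5 q.1 hqm _ _).trans ?_
    rw [mul_comm]
    have := hLfnn q
    gcongr
  have hφint : ∀ {b : ℝ × 𝕏 → ℝ}, (Measurable b ∧ (∀ q, 0 ≤ b q) ∧
      (∫⁻ q, ENNReal.ofReal (b q * Real.log (b q) - b q + 1)
        ∂((volume.restrict (Set.Icc 0 T)).prod ν)) ≤ (N : ℝ≥0∞)) →
      Integrable (fun q => ‖f q.1 (u q.1) q.2‖ * |b q - 1|)
        ((volume.restrict (Set.Icc 0 T)).prod ν) := by
    intro b hb
    refine Integrable.mono' ((hLfg hb).1.const_mul (1 + M))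
      (hφm.norm.mul (hb.1.sub_const 1).abs).aestronglyMeasurable ?_
    filter_upwards [hφ] with q hq
    rw [Real.norm_of_nonneg (by positivity), ← mul_assoc]
    gcongr
  have hφexp : ∀ σ : ℝ, 0 ≤ σ → Integrable
      (fun q => ((1 + M) * Lf q) ^ 2 * Real.exp (σ * ((1 + M) * Lf q)))
      ((volume.restrict (Set.Icc 0 T)).prod ν) := by
    intro σ hσ
    convert (hLfexp (σ * (1 + M)) (by positivity)).const_mul ((1 + M) ^ 2) using 2 with q
    rw [mul_pow, mul_assoc, mul_assoc σ]
  have hWm : ∀ n, Measurable fun s => i (un n s - u s) := fun n =>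
    i.continuous.measurable.comp ((hXn n).2.1.sub hu).measurable
  have hWM : ∀ n, ∀ᵐ s ∂(volume.restrict (Set.Icc 0 T)), ‖i (un n s - u s)‖ ≤ M + M := by
    intro n
    filter_upwards [hM, hMn n] with s h h'
    rw [map_sub]
    exact (norm_sub_le _ _).trans (add_le_add h' h)
  have hW : ∀ b ∈ Set.range i, ∃ c : ℝ, ∀ n, ∃ a' : ℝ → ℝ, IntervalIntegrable a' volume 0 T ∧
      ∫ r in (0 : ℝ)..T, |a' r| ≤ c ∧ ∀ᵐ s ∂(volume.restrict (Set.Icc 0 T)),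
        ⟪b, i (un n s - u s)⟫ = ∫ r in (0 : ℝ)..s, a' r := by
    rintro _ ⟨v, rfl⟩
    obtain ⟨d1, d2⟩ := hc.integral_abs_drift_le hg.1 (hLfg hg).1 (hLfg hg).2 hu huα hU hM0 hM hY v
    generalize hdef : ((∫ r in Set.Icc 0 T, F r) + C * U) * (1 + M ^ β) + T * (c * ‖v‖ ^ α)
      + (1 + M) * S * ‖i v‖ = c' at d2
    refine ⟨c' + c', fun n => ?_⟩
    obtain ⟨e1, e2⟩ := hc.integral_abs_drift_le (hgn n).1 (hLfg (hgn n)).1 (hLfg (hgn n)).2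
      (hXn n).2.1 (hXn n).integrableOn_norm_rpow (hbound (hgn n) (hXn n)).2 hM0 (hMn n) hY v
    rw [hdef] at e2
    refine ⟨_, e1.sub d1, ?_, ?_⟩
    · refine (intervalIntegral.integral_mono_on hT.le (e1.sub d1).abs (e1.abs.add d1.abs)
        fun r _ => abs_sub _ _).trans ?_
      rw [intervalIntegral.integral_add e1.abs d1.abs]
      exact add_le_add e2 d2
    · filter_upwards [hX.2.2.1, (hXn n).2.2.1, ae_restrict_mem measurableSet_Icc] with s h h' hs
      have hsub : Set.uIcc 0 s ⊆ Set.uIcc 0 T := by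
        rw [Set.uIcc_of_le hs.1, Set.uIcc_of_le hT.le]
        exact Set.Icc_subset_Icc le_rfl hs.2
      rw [map_sub, h, h', real_inner_comm, inner_sub_left,
        (hXn n).inner_eq hc (hgn n).1 (hLfg (hgn n)).1 (hMn n) hs v,
        hX.inner_eq hc hg.1 (hLfg hg).1 hM hs v,
        intervalIntegral.integral_sub (e1.mono_set hsub) (d1.mono_set hsub)]
      ring
  intro ε hε
  set Q : ℝ := Real.exp ((∫ r in Set.Icc 0 T, K r) + (∫ r in Set.Icc 0 T, ρ (u r)) + 2 * S')
  have hQ : 0 < Q := Real.exp_pos _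
  have hR : 0 < ε ^ 2 / (2 * Q) := by positivity
  obtain ⟨n₀, hn₀⟩ := eventually_atTop.1 (eventually_abs_integral_inner_le hT hgn hg
    (fun B hB hBfin => tendsto_setIntegral_restrict_prod hνK hgn hg hconv hB hBfin)
    hφm hφexp hφ hWm (add_nonneg hM0 hM0) hWM hiDense ⟨0, map_zero i⟩ hW hR)
  refine ⟨n₀, fun n hn t ht => ?_⟩
  have hEI := intervalIntegrable_integral_prod hT.le (integrable_inner_mul_sub (hgn n).1 hg.1 hφm
    (hWm n) (add_nonneg hM0 hM0) (hWM n) (hφint (hgn n)) (hφint hg) (le_max_left _ _)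
    (le_max_right _ _)).1
  have hfin := (hXn n).norm_sub_sq_le hX hc hiDense (hgn n).1 hg.1 (hLfg (hgn n)).1 (hLfg hg).1
    hKnn hK hρnn hρu hmono hGfnn h6 (hGfg n).1 (hGfg n).2 hEI hR.le (hn₀ n hn) t ht
  refine (sq_le_sq₀ (norm_nonneg _) hε.le).1 (hfin.trans (le_of_eq ?_))
  change 2 * (ε ^ 2 / (2 * Q)) * Q = ε ^ 2
  field_simp
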